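/- arXiv:2210.02103 — 6 statements merged into one kernel-verified Lean document; each statement's English description precedes it below -/
import Mathlib

section
/- Let (k,′) be a differential field of characteristic zero with algebraic closure k̄, equipped with the unique extension of ′ to k̄. Let a ∈ k, and let θ ∈ k̄ be a nonzero element with θ′ = aθ such that n := [k(θ):k] is minimal among the degrees [k(σ):k] over all nonzero σ ∈ k̄ satisfying σ′ = aσ. Then θⁿ ∈ k; equivalently, the minimal polynomial of θ over k has the form Xⁿ + a₀ with a₀ ∈ k. -/
open scoped TensorProduct

/-- A derivation on a (possibly noncommutative) ring: an additive map satisfying the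
Leibniz rule. -/
structure IsRingDeriv {A : Type*} [Ring A] (d : A → A) : Prop where
  map_add : ∀ x y, d (x + y) = d x + d y
  leibniz : ∀ x y, d (x * y) = d x * y + x * d y

/-- The derivation `d` on the `k`-algebra `A` restricts to the derivation `δ` on `k`
(along `algebraMap k A`). -/
def RestrictsTo {k A : Type*} [CommRing k] [Ring A] [Algebra k A]
    (δ : k → k) (d : A → A) : Prop :=
  ∀ c : k, d (algebraMap k A c) = algebraMap k A (δ c)

theorem aux_one {A : Type*} [Ring A] {d : A → A} (h : IsRingDeriv d) : d 1 = 0 := by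
  have := h.leibniz 1 1
  simpa using this

theorem aux_pow {A : Type*} [CommRing A] {d : A → A} (h : IsRingDeriv d) (x : A) (m : ℕ) :
    x * d (x ^ m) = m * d x * x ^ m := by
  induction m with
  | zero => simp [aux_one h]
  | succ m ih =>
    rw [pow_succ, h.leibniz, mul_add, ← mul_assoc, ih]
    push_cast
    ring

theorem aux_sum {A ι : Type*} [Ring A] {d : A → A} (h : IsRingDeriv d) (s : Finset ι)
    (f : ι → A) : d (∑ i ∈ s, f i) = ∑ i ∈ s, d (f i) :=
  map_sum (AddMonoidHom.mk' d h.map_add) f s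

/-- Let `(k, ′)` be a differential field of characteristic zero with
algebraic closure `K` carrying the extended derivation. If `θ ≠ 0` satisfies `θ′ = aθ`
with `a ∈ k` and `n := [k(θ) : k]` minimal among all nonzero solutions, then `θ^n ∈ k`. -/
theorem stmt_0 (k : Type*) [Field k] [CharZero k]
    (δk : k → k) (hδk : IsRingDeriv δk)
    (K : Type*) [Field K] [Algebra k K] [IsAlgClosure k K]
    (δK : K → K) (hδK : IsRingDeriv δK) (hres : RestrictsTo δk δK)
    (a : k) (θ : K) (hθ0 : θ ≠ 0)
    (hθ : δK θ = algebraMap k K a * θ)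
    (hmin : ∀ σ : K, σ ≠ 0 → δK σ = algebraMap k K a * σ →
      Module.finrank k ↥(IntermediateField.adjoin k {θ}) ≤
        Module.finrank k ↥(IntermediateField.adjoin k {σ})) :
    ∃ c : k,
      θ ^ (Module.finrank k ↥(IntermediateField.adjoin k {θ})) = algebraMap k K c := by
  have hac : IsAlgClosed K := IsAlgClosure.isAlgClosed k
  have halg : Algebra.IsAlgebraic k K := IsAlgClosure.isAlgebraic
  have hcK : CharZero K := charZero_of_injective_algebraMap (algebraMap k K).injective
  have hint : IsIntegral k θ := Algebra.IsIntegral.isIntegral θ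
  rw [IntermediateField.adjoin.finrank hint] at hmin ⊢
  set p := minpoly k θ with hp
  set n := p.natDegree with hn
  have hmonic : p.Monic := minpoly.monic hint
  have hpow : ∀ i : ℕ, δK (θ ^ i) = i * algebraMap k K a * θ ^ i := by
    intro i
    apply mul_left_cancel₀ hθ0
    rw [aux_pow hδK, hθ]
    ring
  have hsum : ∑ i ∈ Finset.range (n + 1), algebraMap k K (p.coeff i) * θ ^ i = 0 := by
    have := minpoly.aeval k θ
    rw [Polynomial.aeval_eq_sum_range] at this
    simpa [Algebra.smul_def] using this
  have hd0 : δK 0 = 0 := by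
    have := hδK.map_add 0 0
    simpa using this
  have hk1 : δk 1 = 0 := aux_one hδk
  let c : ℕ → k := fun i => δk (p.coeff i) + i * a * p.coeff i - n * a * p.coeff i
  have hc : ∑ i ∈ Finset.range n, algebraMap k K (c i) * θ ^ i = 0 := by
    have h1 : ∑ i ∈ Finset.range (n + 1), algebraMap k K (c i) * θ ^ i = 0 := by
      have h2 := congrArg δK hsum
      rw [aux_sum hδK, hd0] at h2
      have h3 := congrArg (fun x => (n * algebraMap k K a) * x) hsum
      simp only [Finset.mul_sum, mul_zero] at h3
      rw [← sub_zero (0 : K)]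
      nth_rewrite 1 [← h2]
      rw [← h3, ← Finset.sum_sub_distrib]
      refine Finset.sum_congr rfl fun i _ => ?_
      rw [hδK.leibniz, hres, hpow]
      simp only [c, map_sub, map_add, map_mul, map_natCast]
      ring
    rw [Finset.sum_range_succ] at h1
    have hcn : c n = 0 := by
      have : p.coeff n = 1 := hmonic
      simp [c, this, hk1]
    simpa [hcn] using h1
  have hc0 : ∀ i < n, c i = 0 := by
    let q : Polynomial k := ∑ i ∈ Finset.range n, Polynomial.monomial i (c i)
    have hq : Polynomial.aeval θ q = 0 := by
      simpa [q, Polynomial.aeval_monomial] using hc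
    have hcoef : ∀ i, q.coeff i = if i < n then c i else 0 := by
      intro i
      simp [q, Polynomial.finset_sum_coeff, Polynomial.coeff_monomial]
    have hq0 : q = 0 := by
      by_contra hne
      have h1 := minpoly.degree_le_of_ne_zero k θ hne hq
      have h2 : q.degree < n := by
        rw [Polynomial.degree_lt_iff_coeff_zero]
        intro m hm
        rw [hcoef, if_neg (by omega)]
      rw [← hp, Polynomial.degree_eq_natDegree hmonic.ne_zero] at h1
      exact absurd h2 (not_lt.2 h1)
    intro i hi
    have := hcoef i
    rw [hq0, if_pos hi] at this
    simpa using this.symm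
  have hnpos : 0 < n := minpoly.natDegree_pos hint
  have hz : ∀ i, 0 < i → i < n → p.coeff i = 0 := by
    intro i hi0 hi
    by_contra hne
    have hm : 0 < n - i := by omega
    obtain ⟨σ, hσ⟩ := IsAlgClosed.exists_pow_nat_eq (algebraMap k K (p.coeff i)) hm
    have hne' : algebraMap k K (p.coeff i) ≠ 0 := by simpa using hne
    have hσ0 : σ ≠ 0 := by
      rintro rfl
      rw [zero_pow hm.ne'] at hσ
      exact hne' hσ.symm
    have hσd : δK σ = algebraMap k K a * σ := by
      have h1 := aux_pow hδK σ (n - i)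
      have h2 : δk (p.coeff i) = ((n - i : ℕ) : k) * a * p.coeff i := by
        have := hc0 i hi
        simp only [c] at this
        rw [Nat.cast_sub hi.le]
        linear_combination this
      rw [hσ, hres, h2] at h1
      simp only [map_mul, map_natCast] at h1
      have h3 : ((n - i : ℕ) : K) ≠ 0 := by exact_mod_cast hm.ne'
      apply mul_left_cancel₀ (mul_ne_zero h3 hne')
      linear_combination -h1
    have h4 := hmin σ hσ0 hσd
    rw [IntermediateField.adjoin.finrank (Algebra.IsIntegral.isIntegral σ)] at h4
    have h5 : (minpoly k σ).natDegree ≤ n - i := by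
      have hX : (Polynomial.X ^ (n - i) - Polynomial.C (p.coeff i)).natDegree = n - i :=
        Polynomial.natDegree_X_pow_sub_C
      rw [← hX]
      apply Polynomial.natDegree_le_natDegree
      apply minpoly.min k σ (Polynomial.monic_X_pow_sub_C _ hm.ne')
      simp [hσ]
    omega
  refine ⟨-p.coeff 0, ?_⟩
  have hpn : p.coeff n = 1 := hmonic
  rw [Finset.sum_range_succ, Finset.sum_eq_single_of_mem 0 (Finset.mem_range.2 hnpos), hpn] at hsum
  · simp only [map_one, one_mul, pow_zero, mul_one] at hsum
    rw [map_neg]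
    linear_combination hsum
  · intro i hi hi0
    rw [hz i (Nat.pos_of_ne_zero hi0) (Finset.mem_range.1 hi)]
    simp
end

section
/- Let (k,′) be a differential field of characteristic zero, and let k(t) be the rational function field equipped with the derivation extending ′ and satisfying t′ = α₀ + α₁t + α₂t², where α₀, α₁, α₂ ∈ k and α₂ ≠ 0. Let n ≥ 1 be a natural number and let f ∈ k(t) be a nonzero solution of Y′ = n(α₁/2 + α₂t)Y. Then every γ in the algebraic closure k̄ of k that is a zero or a pole of f (i.e., a root of the numerator or of the denominator of f in reduced form) satisfies γ′ = α₀ + α₁γ + α₂γ², where ′ on k̄ is the unique extension of the derivation on k. -/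
open scoped TensorProduct

open Polynomial in
theorem aux_dvd {k : Type*} [Field k] [CharZero k] (D : k[X] → k[X])
    (hD : ∀ x y, D (x * y) = D x * y + x * D y) (μ P : k[X]) (hμ : Prime μ) (hP : P ≠ 0)
    (hμP : μ ∣ P) (hPD : P ∣ D P) : μ ∣ D μ := by
  have h1 : D 1 = 0 := by
    have := hD 1 1
    simpa using this
  have hpow : ∀ m : ℕ, D (μ ^ m) * μ = (m : k[X]) * μ ^ m * D μ := by
    intro m
    induction m with
    | zero => simp [h1]
    | succ m ih =>
      rw [pow_succ, hD, add_mul, ih]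
      push_cast
      ring
  have hfin : FiniteMultiplicity μ P :=
    FiniteMultiplicity.of_prime_left hμ hP
  obtain ⟨g, hg, hng⟩ := hfin.exists_eq_pow_mul_and_not_dvd
  set m := multiplicity μ P with hm
  have hm0 : m ≠ 0 := by
    intro h0
    rw [h0] at hg
    apply hng
    simpa [hg] using hμP
  obtain ⟨r, hr⟩ := hPD
  rw [hg, hD] at hr
  have e : μ ^ m * ((m : k[X]) * D μ * g) = μ ^ m * (μ * (g * r - D g)) := by
    linear_combination μ * hr - g * hpow m
  have e2 := mul_left_cancel₀ (pow_ne_zero m hμ.ne_zero) e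
  have h3 : μ ∣ (m : k[X]) * D μ * g := ⟨_, e2⟩
  rcases hμ.dvd_or_dvd h3 with h | h
  · rcases hμ.dvd_or_dvd h with h | h
    · exfalso
      apply hμ.not_isUnit
      refine isUnit_of_dvd_unit h ?_
      rw [← map_natCast (C : k →+* k[X])]
      exact (isUnit_iff_ne_zero.mpr (Nat.cast_ne_zero.mpr hm0)).map C
    · exact h
  · exact absurd h hng

/-- Over the rational function field `k(t)` with `t′ = α₀ + α₁ t + α₂ t²`
(`α₂ ≠ 0`), every zero and pole (in the algebraic closure of `k`) of a nonzero solution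
`f ∈ k(t)` of `Y′ = n(α₁/2 + α₂ t) Y` is a solution of the Riccati equation
`X′ = α₀ + α₁ X + α₂ X²`. -/
theorem stmt_1 (k : Type*) [Field k] [CharZero k]
    (δk : k → k) (hδk : IsRingDeriv δk)
    (α₀ α₁ α₂ : k) (hα₂ : α₂ ≠ 0)
    (δF : RatFunc k → RatFunc k) (hδF : IsRingDeriv δF) (hres : RestrictsTo δk δF)
    (ht : δF RatFunc.X =
      RatFunc.C α₀ + RatFunc.C α₁ * RatFunc.X + RatFunc.C α₂ * RatFunc.X ^ 2)
    (n : ℕ) (hn : 1 ≤ n)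
    (f : RatFunc k) (hf0 : f ≠ 0)
    (hf : δF f = (n : RatFunc k) * (RatFunc.C (α₁ / 2) + RatFunc.C α₂ * RatFunc.X) * f)
    (K : Type*) [Field K] [Algebra k K] [IsAlgClosure k K]
    (δK : K → K) (hδK : IsRingDeriv δK) (hresK : RestrictsTo δk δK)
    (γ : K) (hγ : Polynomial.aeval γ f.num = 0 ∨ Polynomial.aeval γ f.denom = 0) :
    δK γ = algebraMap k K α₀ + algebraMap k K α₁ * γ + algebraMap k K α₂ * γ ^ 2 := by
  classical
  have hw : ∃ w : Polynomial k, w = Polynomial.C α₀ + Polynomial.C α₁ * Polynomial.X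
      + Polynomial.C α₂ * Polynomial.X ^ 2 := ⟨_, rfl⟩
  obtain ⟨w, hw⟩ := hw
  have htw : δF (algebraMap (Polynomial k) (RatFunc k) Polynomial.X)
      = algebraMap (Polynomial k) (RatFunc k) w := by
    rw [RatFunc.algebraMap_X, ht, hw]
    simp
  have hC : ∀ a : k, δF (algebraMap (Polynomial k) (RatFunc k) (Polynomial.C a))
      = algebraMap (Polynomial k) (RatFunc k) (Polynomial.C (δk a)) := by
    intro a
    have := hres a
    simpa [RatFunc.algebraMap_eq_C] using this
  have hex : ∀ p : Polynomial k, ∃ s : Polynomial k,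
      δF (algebraMap (Polynomial k) (RatFunc k) p)
        = algebraMap (Polynomial k) (RatFunc k) (s + Polynomial.derivative p * w) ∧
      δK (Polynomial.aeval γ p)
        = Polynomial.aeval γ s + Polynomial.aeval γ (Polynomial.derivative p) * δK γ := by
    intro p
    induction p using Polynomial.induction_on with
    | C a =>
      refine ⟨Polynomial.C (δk a), ?_, ?_⟩
      · rw [hC]; simp
      · simpa using hresK a
    | add p q hp hq =>
      obtain ⟨s, h1, h2⟩ := hp
      obtain ⟨s', h1', h2'⟩ := hq
      refine ⟨s + s', ?_, ?_⟩
      · rw [map_add, hδF.map_add, h1, h1', ← map_add, Polynomial.derivative_add]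
        congr 1
        ring
      · rw [map_add, hδK.map_add, h2, h2', Polynomial.derivative_add, map_add, map_add]
        ring
    | monomial m a hp =>
      obtain ⟨s, h1, h2⟩ := hp
      rw [pow_succ, ← mul_assoc]
      generalize Polynomial.C a * Polynomial.X ^ m = p at h1 h2 ⊢
      refine ⟨s * Polynomial.X, ?_, ?_⟩
      · rw [map_mul, hδF.leibniz, h1, htw, ← map_mul, ← map_mul, ← map_add,
          Polynomial.derivative_mul,
          Polynomial.derivative_X]
        congr 1
        ring
      · rw [map_mul, hδK.leibniz, h2,
          Polynomial.derivative_mul,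
          Polynomial.derivative_X, mul_one, map_add, map_mul, map_mul, Polynomial.aeval_X]
        ring
  choose S hSF hSK using hex
  have hinj : Function.Injective (algebraMap (Polynomial k) (RatFunc k)) :=
    RatFunc.algebraMap_injective k
  obtain ⟨D, hDdef⟩ : ∃ D : Polynomial k → Polynomial k,
      ∀ p, D p = S p + Polynomial.derivative p * w := ⟨_, fun _ => rfl⟩
  have hDF : ∀ p, δF (algebraMap (Polynomial k) (RatFunc k) p)
      = algebraMap (Polynomial k) (RatFunc k) (D p) := by
    intro p; rw [hDdef, hSF]
  have hD : ∀ x y, D (x * y) = D x * y + x * D y := by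
    intro x y
    apply hinj
    rw [← hDF, map_mul, hδF.leibniz, hDF, hDF, map_add, map_mul, map_mul]
  have hq0 : algebraMap (Polynomial k) (RatFunc k) f.denom ≠ 0 := by
    rw [Ne, map_eq_zero_iff _ hinj]; exact f.denom_ne_zero
  have hfq : f * algebraMap (Polynomial k) (RatFunc k) f.denom
      = algebraMap (Polynomial k) (RatFunc k) f.num := by
    have := f.num_div_denom
    rw [div_eq_iff hq0] at this
    exact this.symm
  have key : D f.num * f.denom = (n : Polynomial k) * (Polynomial.C (α₁ / 2)
      + Polynomial.C α₂ * Polynomial.X) * f.num * f.denom + f.num * D f.denom := by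
    apply hinj
    have e := hDF f.num
    rw [← hfq, hδF.leibniz, hf, hDF] at e
    simp only [map_mul, map_add, map_natCast, RatFunc.algebraMap_C, RatFunc.algebraMap_X]
    rw [← e, ← hfq]
    ring
  have hcop := f.isCoprime_num_denom
  have hnum : f.num ∣ D f.num := by
    apply hcop.dvd_of_dvd_mul_right
    rw [key]
    exact dvd_add (Dvd.intro_left _ rfl |>.mul_right _) (dvd_mul_right _ _)
  have hden : f.denom ∣ D f.denom := by
    apply hcop.symm.dvd_of_dvd_mul_left
    refine ⟨D f.num - (n : Polynomial k) * (Polynomial.C (α₁ / 2)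
      + Polynomial.C α₂ * Polynomial.X) * f.num, ?_⟩
    linear_combination -key
  have halg : Algebra.IsAlgebraic k K := IsAlgClosure.isAlgebraic
  have hint : IsIntegral k γ := (halg.isAlgebraic γ).isIntegral
  have hprime := minpoly.prime hint
  have hdvd : minpoly k γ ∣ D (minpoly k γ) := by
    rcases hγ with h | h
    · exact aux_dvd D hD _ _ hprime (RatFunc.num_ne_zero hf0) (minpoly.dvd k γ h) hnum
    · exact aux_dvd D hD _ _ hprime f.denom_ne_zero (minpoly.dvd k γ h) hden
  have hz : Polynomial.aeval γ (D (minpoly k γ)) = 0 := by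
    obtain ⟨r, hr⟩ := hdvd
    rw [hr, map_mul, minpoly.aeval, zero_mul]
  have hK0 : δK 0 = 0 := by
    have := hδK.map_add 0 0
    simpa using this
  have h2 := hSK (minpoly k γ)
  rw [minpoly.aeval, hK0] at h2
  rw [hDdef, map_add, map_mul] at hz
  have hsep : Polynomial.aeval γ (Polynomial.derivative (minpoly k γ)) ≠ 0 :=
    (minpoly.irreducible hint).separable.aeval_derivative_ne_zero (minpoly.aeval k γ)
  have hfin : δK γ = Polynomial.aeval γ w := by
    apply mul_left_cancel₀ hsep
    linear_combination -h2 - hz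
  rw [hfin, hw]
  simp
end

section
/- Let (k,′) be a differential field of characteristic zero and α₀, α₁, α₂ ∈ k with α₂ ≠ 0. Assume the Riccati equation X′ = α₀ + α₁X + α₂X² has no solution in the algebraic closure k̄ of k (with its unique extended derivation). Let (M,′) be a differential field extension of (k,′) containing two distinct solutions λ₁, λ₂ of this Riccati equation (such solutions are necessarily transcendental over k). Then the equation Y′ = (α₁/2 + α₂λ₁)Y has no nonzero solution algebraic over k(λ₁,λ₂): in any differential field extension of (M,′), every solution that is algebraic over k(λ₁,λ₂) is zero. -/
open scoped TensorProduct

open Polynomial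

/-- derivations of a commutative ring -/
abbrev ZDer (A : Type*) [CommRing A] := Derivation ℤ A A

/-- Bundle a ring derivation. -/
noncomputable def toDer {A : Type*} [CommRing A] {d : A → A} (h : IsRingDeriv d) :
    ZDer A :=
  Derivation.mk' (AddMonoidHom.mk' d h.map_add).toIntLinearMap (by
    intro a b
    simp [h.leibniz]; ring)

theorem toDer_apply {A : Type*} [CommRing A] {d : A → A} (h : IsRingDeriv d) (x : A) :
    toDer h x = d x := rfl

/-- derivation on polynomials applying `d` to coefficients -/
noncomputable def mapC {A : Type*} [CommRing A] (d : ZDer A) : ZDer A[X] :=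
  @Differential.mapCoeffs A _ ⟨d⟩

theorem mapC_coeff {A : Type*} [CommRing A] (d : ZDer A) (p : A[X]) (i : ℕ) :
    (mapC d p).coeff i = d (p.coeff i) := rfl

/-- derivation on polynomials extending `d` with `X' = r` -/
noncomputable def Dp {A : Type*} [CommRing A] (d : ZDer A) (r : A[X]) :
    ZDer A[X] :=
  mapC d + r • (derivative'.restrictScalars ℤ)

theorem Dp_apply {A : Type*} [CommRing A] (d : ZDer A) (r p : A[X]) :
    Dp d r p = mapC d p + r * derivative p := rfl

theorem mapC_C {A : Type*} [CommRing A] (d : ZDer A) (a : A) :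
    mapC d (C a) = C (d a) := by
  ext i
  rw [mapC_coeff, coeff_C, coeff_C]; split_ifs <;> simp

theorem mapC_X {A : Type*} [CommRing A] (d : ZDer A) :
    mapC d (X : A[X]) = 0 := by
  ext i
  rw [mapC_coeff, coeff_X]; split_ifs <;> simp

theorem Dp_C {A : Type*} [CommRing A] (d : ZDer A) (r : A[X]) (a : A) :
    Dp d r (C a) = C (d a) := by
  simp [Dp_apply, mapC_C]

theorem Dp_X {A : Type*} [CommRing A] (d : ZDer A) (r : A[X]) :
    Dp d r X = r := by
  simp [Dp_apply, mapC_X]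

theorem der_eval₂' {A B : Type*} [CommRing A] [CommRing B] (d : ZDer A)
    (e : ZDer B) (φ : A →+* B) (h : ∀ a, e (φ a) = φ (d a)) (l : B) (p : A[X]) :
    e (eval₂ φ l p) = eval₂ φ l (mapC d p) + eval₂ φ l (derivative p) * e l := by
  induction p using Polynomial.induction_on' with
  | add p q hp hq => simp only [eval₂_add, map_add, hp, hq]; ring
  | monomial n a =>
    rw [← C_mul_X_pow_eq_monomial]
    simp only [Derivation.leibniz, Derivation.leibniz_pow, mapC_C, mapC_X, eval₂_mul, eval₂_C,
      eval₂_pow, eval₂_X, h, derivative_mul, derivative_C, derivative_X_pow, smul_eq_mul,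
      eval₂_add, eval₂_natCast, nsmul_eq_mul, map_natCast]
    simp
    ring

theorem der_eval₂ {A B : Type*} [CommRing A] [CommRing B] (d : ZDer A)
    (e : ZDer B) (φ : A →+* B) (h : ∀ a, e (φ a) = φ (d a)) (r : A[X]) (l : B)
    (hl : e l = eval₂ φ l r) (p : A[X]) :
    e (eval₂ φ l p) = eval₂ φ l (Dp d r p) := by
  rw [der_eval₂' d e φ h, Dp_apply, eval₂_add, eval₂_mul, hl]; ring

theorem Dp_dvd_of_mul {A : Type*} [CommRing A] [IsDomain A] (d : ZDer A)
    {q u v : A} (m : ℕ) (hq : q ≠ 0) (hd : d q = v * q) (h : q ^ m * u ∣ d (q ^ m * u)) :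
    u ∣ d u := by
  obtain ⟨w, hw⟩ := h
  have e : d (q ^ m) = m * v * q ^ m := by
    rcases m with _ | m
    · simp
    · simp [Derivation.leibniz_pow, hd]; ring
  rw [Derivation.leibniz, e] at hw
  have : q ^ m * d u = q ^ m * (u * (w - m * v)) := by
    simp only [smul_eq_mul] at hw
    linear_combination hw
  exact ⟨_, mul_left_cancel₀ (pow_ne_zero _ hq) this⟩

/-- Riccati polynomial -/
noncomputable def Ric {A : Type*} [CommRing A] (a b c : A) : A[X] := C a + C b * X + C c * X ^ 2

theorem D_irred {k : Type*} [Field k] [CharZero k] (d : ZDer k) (a b c : k)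
    {kb : Type*} [Field kb] [Algebra k kb] [IsAlgClosure k kb] (e : ZDer kb)
    (h : ∀ x, e (algebraMap k kb x) = algebraMap k kb (d x))
    (hno : ∀ x : kb, e x ≠ algebraMap k kb a + algebraMap k kb b * x + algebraMap k kb c * x ^ 2)
    (q : k[X]) (hq : Irreducible q) (hd : q ∣ Dp d (Ric a b c) q) : False := by
  have : IsAlgClosed kb := IsAlgClosure.isAlgClosed k
  obtain ⟨s, hs⟩ := IsAlgClosed.exists_aeval_eq_zero kb q (degree_pos_of_irreducible hq).ne'
  have h1 := der_eval₂' d e (algebraMap k kb) h s q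
  have h2 : aeval s (Dp d (Ric a b c) q) = 0 := by
    obtain ⟨w, hw⟩ := hd
    rw [hw, map_mul, hs, zero_mul]
  have h3 : aeval s (derivative q) ≠ 0 := hq.separable.aeval_derivative_ne_zero hs
  rw [Dp_apply, map_add, map_mul] at h2
  simp only [← aeval_def, hs, map_zero] at h1
  apply hno s
  have h4 : aeval s (derivative q) * (e s - aeval s (Ric a b c)) = 0 := by
    linear_combination -h2 - h1
  have h5 := (mul_eq_zero.mp h4).resolve_left h3
  simp [Ric] at h5
  linear_combination h5

theorem lemma1 {k : Type*} [Field k] [CharZero k] (D : ZDer k[X])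
    (hno : ∀ q : k[X], Irreducible q → ¬ q ∣ D q) (P : k[X]) (hP : P ≠ 0)
    (hd : P ∣ D P) : P.natDegree = 0 := by
  by_contra hdeg
  have hnu : ¬ IsUnit P := fun hu => hdeg (natDegree_eq_zero_of_isUnit hu)
  obtain ⟨q, hq, hqP⟩ := WfDvdMonoid.exists_irreducible_factor hnu hP
  obtain ⟨u, hu, hnd⟩ := (FiniteMultiplicity.of_prime_left hq.prime hP).exists_eq_pow_mul_and_not_dvd
  set m := multiplicity q P
  have hm : m ≠ 0 := by
    intro h0; rw [h0, pow_zero, one_mul] at hu; exact hnd (hu ▸ hqP)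
  obtain ⟨n, hn⟩ := Nat.exists_eq_succ_of_ne_zero hm
  obtain ⟨w, hw⟩ := hd
  rw [hu, hn, Derivation.leibniz, Derivation.leibniz_pow] at hw
  simp only [smul_eq_mul, nsmul_eq_mul, Nat.succ_sub_one, Nat.succ_eq_add_one] at hw
  have h1 : q ^ n * (((n + 1 : ℕ) : k[X]) * D q * u) = q ^ n * (q * (u * w - D u)) := by
    linear_combination hw
  have h2 := mul_left_cancel₀ (pow_ne_zero n hq.ne_zero) h1
  have h3 : q ∣ ((n + 1 : ℕ) : k[X]) * D q * u := ⟨_, h2⟩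
  rcases hq.prime.dvd_or_dvd h3 with h4 | h4
  · rcases hq.prime.dvd_or_dvd h4 with h5 | h5
    · have : IsUnit ((n + 1 : ℕ) : k[X]) := by
        rw [← C_eq_natCast]
        exact isUnit_C.mpr (IsUnit.mk0 _ (by exact_mod_cast Nat.succ_ne_zero n))
      exact hq.not_isUnit (isUnit_of_dvd_unit h5 this)
    · exact hno q hq h5
  · exact hnd h4

theorem descend {N : Type*} [Field N] {k : Type*} [Field k] [Algebra k N] (δ : N → N)
    (hδ : IsRingDeriv δ) (F : IntermediateField k N) (hF : ∀ x ∈ F, δ x ∈ F) (a y : N)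
    (ha : a ∈ F) (hy : δ y = a * y) (hy0 : y ≠ 0) (halg : IsAlgebraic F y) :
    ∃ n : ℕ, n ≠ 0 ∧ ∃ z ∈ F, z ≠ 0 ∧ δ z = n * a * z := by
  let dF : F → F := fun x => ⟨δ x, hF x x.2⟩
  have hdF : IsRingDeriv dF :=
    ⟨fun x y => Subtype.ext (hδ.map_add _ _), fun x y => Subtype.ext (hδ.leibniz _ _)⟩
  have hint := halg.isIntegral
  set p := minpoly F y with hp
  have hmon : p.Monic := minpoly.monic hint
  set D := Dp (toDer hdF) (C ⟨a, ha⟩ * X) with hD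
  have h1 : p ∣ D p := by
    apply minpoly.dvd
    have := der_eval₂ (toDer hdF) (toDer hδ) (algebraMap F N) (fun _ => rfl) (C ⟨a, ha⟩ * X) y
      (by rw [eval₂_mul, eval₂_C, eval₂_X]; exact hy) p
    rw [← aeval_def, ← aeval_def, hp, minpoly.aeval, map_zero] at this
    exact this.symm
  have hco : ∀ i, (D p).coeff i = toDer hdF (p.coeff i) + i * ⟨a, ha⟩ * p.coeff i := by
    intro i
    rw [hD, Dp_apply, coeff_add, mapC_coeff, mul_assoc, coeff_C_mul]
    rcases i with _ | i
    · simp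
    · rw [coeff_X_mul, coeff_derivative]; push_cast; ring
  have hle : (D p).natDegree ≤ p.natDegree := by
    rw [natDegree_le_iff_coeff_eq_zero]
    intro i hi
    rw [hco, coeff_eq_zero_of_natDegree_lt hi]; simp
  obtain ⟨w, hw⟩ := h1
  have hw0 : w.natDegree = 0 := by
    by_cases h0 : w = 0
    · simp [h0]
    · rw [hw, natDegree_mul hmon.ne_zero h0] at hle
      omega
  obtain ⟨c, rfl⟩ := natDegree_eq_zero.mp hw0
  have hc := hco p.natDegree
  rw [hw, coeff_mul_C, hmon.coeff_natDegree] at hc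
  simp only [Derivation.map_one_eq_zero, one_mul, mul_one, zero_add] at hc
  have h0 := hco 0
  rw [hw, coeff_mul_C] at h0
  refine ⟨p.natDegree, (minpoly.natDegree_pos hint).ne', (p.coeff 0 : N), (p.coeff 0).2, ?_, ?_⟩
  · have := minpoly.coeff_zero_ne_zero hint hy0
    exact_mod_cast this
  · have h2 : toDer hdF (p.coeff 0) = p.natDegree * ⟨a, ha⟩ * p.coeff 0 := by
      rw [← hc]; simp at h0; rw [← h0]; ring
    have h3 : δ (p.coeff 0) = _ := congrArg (Subtype.val) h2
    simpa using h3

theorem Ric_coeff_zero {A : Type*} [CommRing A] (d : ZDer A) (a b c : A) (p : A[X]) :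
    (Dp d (Ric a b c) p).coeff 0 = d (p.coeff 0) + a * p.coeff 1 := by
  rw [Dp_apply, coeff_add, mapC_coeff, mul_coeff_zero, coeff_derivative]
  simp [Ric]

theorem Ric_coeff_succ {A : Type*} [CommRing A] (d : ZDer A) (a b c : A) (p : A[X])
    (i : ℕ) :
    (Dp d (Ric a b c) p).coeff (i + 1) = d (p.coeff (i + 1)) + a * ((i + 2) * p.coeff (i + 2))
      + b * ((i + 1) * p.coeff (i + 1)) + c * (i * p.coeff i) := by
  rw [Dp_apply, coeff_add, mapC_coeff, Ric, add_mul, add_mul, mul_assoc, mul_assoc, coeff_add,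
    coeff_add, coeff_C_mul, coeff_C_mul, coeff_C_mul, coeff_X_mul, pow_two, mul_assoc, coeff_X_mul,
    coeff_derivative, coeff_derivative]
  rcases i with _ | i
  · simp; ring
  · rw [coeff_X_mul, coeff_derivative]; push_cast; ring

theorem Ric_top {A : Type*} [CommRing A] (d : ZDer A) (a b c : A) (p : A[X])
    (n : ℕ) (hn : p.natDegree ≤ n) :
    (Dp d (Ric a b c) p).coeff (n + 1) = c * (n * p.coeff n) := by
  rw [Ric_coeff_succ, coeff_eq_zero_of_natDegree_lt (show p.natDegree < n + 1 by omega),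
    coeff_eq_zero_of_natDegree_lt (show p.natDegree < n + 2 by omega)]
  simp

theorem Ric_deg {A : Type*} [CommRing A] (d : ZDer A) (a b c : A) (p : A[X]) :
    (Dp d (Ric a b c) p).natDegree ≤ p.natDegree + 1 := by
  rw [natDegree_le_iff_coeff_eq_zero]
  intro i hi
  obtain ⟨j, rfl⟩ : ∃ j, i = j + 1 := ⟨i - 1, by omega⟩
  rw [Ric_top d a b c p j (by omega), coeff_eq_zero_of_natDegree_lt (by omega)]
  simp

/-- the two-variable derivation -/
noncomputable def D2 {k : Type*} [CommRing k] (d : ZDer k) (a b c : k) :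
    ZDer k[X][X] :=
  Dp (Dp d (Ric a b c)) (Ric (C a) (C b) (C c))

theorem D2_diag {k : Type*} [CommRing k] (d : ZDer k) (a b c : k) (P : k[X][X]) :
    Dp d (Ric a b c) (P.eval X) = (D2 d a b c P).eval X := by
  have := der_eval₂ (Dp d (Ric a b c)) (Dp d (Ric a b c)) (RingHom.id _) (fun _ => rfl)
    (Ric (C a) (C b) (C c)) X (by rw [Dp_X]; simp [Ric]) P
  rw [D2]; simpa only [eval₂_id] using this

theorem D2_lin {k : Type*} [CommRing k] (d : ZDer k) (a b c : k) :
    D2 d a b c (X - C X) = (C (C b) + C (C c) * (X + C X)) * (X - C X) := by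
  rw [map_sub, D2, Dp_X, Dp_C, Dp_X]
  simp [Ric]
  ring

theorem lemma2 {k : Type*} [Field k] [CharZero k] (d : ZDer k) (a b c : k) (hc : c ≠ 0)
    (hno : ∀ q : k[X], Irreducible q → ¬ q ∣ Dp d (Ric a b c) q) (P : k[X][X])
    (hP : P.eval X ≠ 0) (hd : P ∣ D2 d a b c P) : ∃ u : k, u ≠ 0 ∧ P = C (C u) := by
  have hP0 : P ≠ 0 := by rintro rfl; simp at hP
  obtain ⟨A, hA⟩ := hd
  -- the diagonal
  have hdiag := D2_diag d a b c P
  rw [hA, eval_mul] at hdiag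
  have hdeg := lemma1 _ hno _ hP ⟨_, hdiag⟩
  obtain ⟨p0, hp0⟩ := natDegree_eq_zero.mp hdeg
  have hp00 : p0 ≠ 0 := by rintro rfl; apply hP; rw [← hp0]; simp
  rw [← hp0, Dp_C] at hdiag
  have hAX : A.eval X = C (d p0 / p0) := by
    have : C p0 * A.eval X = C p0 * C (d p0 / p0) := by
      rw [← hdiag, ← C_mul]; congr 1; field_simp
    exact mul_left_cancel₀ (C_ne_zero.mpr hp00) this
  -- degree in outer variable
  have hAdeg : A.natDegree ≤ 1 := by
    by_cases h0 : A = 0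
    · simp [h0]
    have := Ric_deg (Dp d (Ric a b c)) (C a) (C b) (C c) P
    change (D2 d a b c P).natDegree ≤ _ at this
    rw [hA, natDegree_mul hP0 h0] at this
    omega
  set n := P.natDegree with hn
  have hA1 : A.coeff 1 = C (c * n) := by
    have h1 := Ric_top (Dp d (Ric a b c)) (C a) (C b) (C c) P n le_rfl
    change (D2 d a b c P).coeff _ = _ at h1
    rw [hA, coeff_mul_add_eq_of_natDegree_le le_rfl hAdeg] at h1
    have h2 : P.coeff n ≠ 0 := by rw [hn]; exact leadingCoeff_ne_zero.mpr hP0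
    apply mul_left_cancel₀ h2
    rw [h1]; simp; ring
  have hAe : A = C (A.coeff 1) * X + C (A.coeff 0) := eq_X_add_C_of_natDegree_le_one hAdeg
  have hA0 : A.coeff 0 = C (d p0 / p0) - C (c * n) * X := by
    rw [hAe, hA1] at hAX
    simp only [eval_add, eval_mul, eval_C, eval_X] at hAX
    rw [← hAX]; ring
  -- degree in inner variable
  obtain ⟨i, hi, hmax⟩ := Finset.exists_max_image P.support (fun j => (P.coeff j).natDegree)
    (nonempty_support_iff.mpr hP0)
  set e := (P.coeff i).natDegree with he
  have hle : ∀ j, (P.coeff j).natDegree ≤ e := by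
    intro j
    by_cases hj : j ∈ P.support
    · exact hmax j hj
    · rw [notMem_support_iff.mp hj]; simp
  have hz : ∀ j, (P.coeff j).coeff (e + 1) = 0 := fun j =>
    coeff_eq_zero_of_natDegree_lt (Nat.lt_succ_of_le (hle j))
  have hlc : (P.coeff i).coeff e ≠ 0 := leadingCoeff_ne_zero.mpr (mem_support_iff.mp hi)
  have key : (e : k) + n = 0 := by
    have hL : ((D2 d a b c P).coeff i).coeff (e + 1) = c * (e * (P.coeff i).coeff e) := by
      rw [D2]
      rcases i with _ | i
      · rw [Ric_coeff_zero, coeff_add, Ric_top d a b c _ e (hle _), coeff_C_mul, hz]; simp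
      · rw [Ric_coeff_succ, coeff_add, coeff_add, coeff_add, Ric_top d a b c _ e (hle _),
          coeff_C_mul, coeff_C_mul, coeff_C_mul]
        have q1 : ∀ (m : ℕ) j, ((m : k[X]) * P.coeff j).coeff (e + 1) = 0 := by
          intro m j; rw [← C_eq_natCast, coeff_C_mul, hz, mul_zero]
        have := q1 (i + 2) (i + 2)
        have h' := q1 (i + 1) (i + 1)
        push_cast at this h'
        rw [this, h', q1]; simp
    have hR : ((P * A).coeff i).coeff (e + 1) = - (c * n) * (P.coeff i).coeff e := by
      rw [hAe, hA1, hA0, mul_add, coeff_add, coeff_mul_C, ← mul_assoc, mul_sub, coeff_add,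
        coeff_sub, coeff_mul_C, hz, ← mul_assoc, coeff_mul_X, coeff_mul_C]
      have : ((P * C (C (c * n)) * X).coeff i).coeff (e + 1) = 0 := by
        rcases i with _ | i
        · simp
        · rw [coeff_mul_X, coeff_mul_C, coeff_mul_C, hz, zero_mul]
      rw [this]; ring
    rw [hA, hR] at hL
    have h3 : c * (P.coeff i).coeff e * (e + n) = 0 := by linear_combination -hL
    exact (mul_eq_zero.mp h3).resolve_left (mul_ne_zero hc hlc)
  have key' : e + n = 0 := by exact_mod_cast key
  have hn0 : P.natDegree = 0 := by omega
  have he0 : e = 0 := by omega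
  obtain ⟨Q, hQ⟩ := natDegree_eq_zero.mp hn0
  have hQ0 : Q.natDegree = 0 := by
    have := hle 0
    rw [← hQ, coeff_C_zero] at this; omega
  obtain ⟨u, hu⟩ := natDegree_eq_zero.mp hQ0
  refine ⟨u, ?_, by rw [← hQ, hu]⟩
  rintro rfl
  apply hP0; rw [← hQ, ← hu]; simp

theorem lemma3 {k : Type*} [Field k] [CharZero k] (d : ZDer k) (a b c : k) (hc : c ≠ 0)
    (hno : ∀ q : k[X], Irreducible q → ¬ q ∣ Dp d (Ric a b c) q) (P : k[X][X])
    (hP : P ≠ 0) (hd : P ∣ D2 d a b c P) :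
    ∃ (u : k) (m : ℕ), D2 d a b c P =
      (C (C u) + (m : k[X][X]) * (C (C b) + C (C c) * (X + C X))) * P := by
  obtain ⟨Q, hQ, hnd⟩ := exists_eq_pow_rootMultiplicity_mul_and_not_dvd P hP (X : k[X])
  set m := rootMultiplicity X P
  have hne : (X - C X : k[X][X]) ≠ 0 := X_sub_C_ne_zero _
  rw [hQ] at hd
  have h1 := Dp_dvd_of_mul (D2 d a b c) m hne (D2_lin d a b c) hd
  have h2 : Q.eval X ≠ 0 := fun h => hnd (dvd_iff_isRoot.mpr h)
  obtain ⟨u, hu, rfl⟩ := lemma2 d a b c hc hno Q h2 h1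
  refine ⟨d u / u, m, ?_⟩
  have e1 : D2 d a b c (C (C u)) = C (C (d u / u)) * C (C u) := by
    rw [D2, Dp_C, Dp_C, ← C_mul, ← C_mul]; congr 2; field_simp
  have e2 : D2 d a b c ((X - C X) ^ m) =
      (m : k[X][X]) * (C (C b) + C (C c) * (X + C X)) * (X - C X) ^ m := by
    rcases m with _ | m
    · simp
    · simp only [Derivation.leibniz_pow, D2_lin, smul_eq_mul, nsmul_eq_mul]
      simp; ring
  rw [hQ, Derivation.leibniz, e1, e2]
  simp only [smul_eq_mul]; ring

theorem ratio {A N : Type*} [CommRing A] [IsDomain A] [UniqueFactorizationMonoid A] [Field N]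
    (D : ZDer A) (e : ZDer N) (φ : A →+* N) (hφ : Function.Injective φ)
    (h : ∀ a, e (φ a) = φ (D a)) (z : N) (hz : z ≠ 0) (P Q : A) (hzPQ : z = φ P / φ Q)
    (g : A) (hg : e z = φ g * z) :
    ∃ P Q : A, P ≠ 0 ∧ Q ≠ 0 ∧ z = φ P / φ Q ∧ P ∣ D P ∧ Q ∣ D Q ∧
      D P * Q = g * (P * Q) + P * D Q := by
  have hP : P ≠ 0 := by rintro rfl; simp at hzPQ; exact hz hzPQ
  have hQ : Q ≠ 0 := by rintro rfl; simp at hzPQ; exact hz hzPQ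
  obtain ⟨p, q, c, hrel, rfl, rfl⟩ := UniqueFactorizationMonoid.exists_reduced_factors P hP Q
  have hp := right_ne_zero_of_mul hP
  have hq := right_ne_zero_of_mul hQ
  have hc := left_ne_zero_of_mul hP
  have hφ0 : ∀ a, a ≠ 0 → φ a ≠ 0 := fun a ha h0 => ha (hφ (by rw [h0, map_zero]))
  have hz1 : z = φ p / φ q := by
    rw [hzPQ, map_mul, map_mul, mul_div_mul_left _ _ (hφ0 c hc)]
  have hz2 : z * φ q = φ p := by rw [hz1, div_mul_cancel₀ _ (hφ0 q hq)]
  have key : D p * q = g * (p * q) + p * D q := by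
    apply hφ
    have h1 := congrArg e hz2
    rw [Derivation.leibniz, hg, h, h] at h1
    simp only [smul_eq_mul] at h1
    simp only [map_mul, map_add]
    rw [← h1, ← hz2]; ring
  refine ⟨p, q, hp, hq, hz1, ?_, ?_, key⟩
  · exact hrel.dvd_of_dvd_mul_right ⟨g * q + D q, by rw [key]; ring⟩
  · exact hrel.symm.dvd_of_dvd_mul_left ⟨D p - g * p, by linear_combination -key⟩

theorem adjoin_stable {k N : Type*} [Field k] [Field N] [Algebra k N] (d : ZDer k) (e : ZDer N)
    (h : ∀ a, e (algebraMap k N a) = algebraMap k N (d a)) (S : Set N)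
    (hS : ∀ s ∈ S, e s ∈ IntermediateField.adjoin k S) (x : N)
    (hx : x ∈ IntermediateField.adjoin k S) : e x ∈ IntermediateField.adjoin k S := by
  induction hx using IntermediateField.adjoin_induction with
  | mem x hx => exact hS x hx
  | algebraMap a => rw [h]; exact IntermediateField.algebraMap_mem _ _
  | add x y _ _ hx hy => rw [map_add]; exact add_mem hx hy
  | inv x hx0 hx =>
    rw [Derivation.leibniz_inv, smul_eq_mul]
    exact mul_mem (neg_mem (pow_mem (inv_mem hx0) 2)) hx
  | mul x y hx0 hy0 hx hy =>
    rw [Derivation.leibniz, smul_eq_mul, smul_eq_mul]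
    exact add_mem (mul_mem hx0 hy) (mul_mem hy0 hx)

theorem ric_mem {k N : Type*} [Field k] [Field N] [Algebra k N] (a b c : k)
    (F : IntermediateField k N) (x : N) (hx : x ∈ F) :
    eval₂ (algebraMap k N) x (Ric a b c) ∈ F := by
  simp only [Ric, eval₂_add, eval₂_mul, eval₂_C, eval₂_X, eval₂_pow]
  exact add_mem (add_mem (F.algebraMap_mem _) (mul_mem (F.algebraMap_mem _) hx))
    (mul_mem (F.algebraMap_mem _) (pow_mem hx 2))

theorem caseB {k : Type*} [Field k] [CharZero k] (d : ZDer k) (a b c : k) (hc : c ≠ 0)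
    (hno : ∀ q : k[X], Irreducible q → ¬ q ∣ Dp d (Ric a b c) q)
    {N : Type*} [Field N] [Algebra k N] (e : ZDer N)
    (h : ∀ x, e (algebraMap k N x) = algebraMap k N (d x)) (x : N)
    (hx : e x = eval₂ (algebraMap k N) x (Ric a b c)) (htr : Transcendental k x)
    (n : ℕ) (hn : n ≠ 0) (z : N) (hz : z ∈ IntermediateField.adjoin k {x}) (hz0 : z ≠ 0)
    (hzd : e z = n * (algebraMap k N (b / 2) + algebraMap k N c * x) * z) : False := by
  obtain ⟨r, s, hrs⟩ := (IntermediateField.mem_adjoin_simple_iff k z).mp hz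
  have hinj : Function.Injective (aeval x : k[X] →ₐ[k] N) :=
    transcendental_iff_injective.mp htr
  obtain ⟨P, Q, hP, hQ, -, hPd, hQd, key⟩ := ratio (Dp d (Ric a b c)) e
    ((aeval x : k[X] →ₐ[k] N) : k[X] →+* N) hinj
    (fun p => by
      have := der_eval₂ d e (algebraMap k N) h (Ric a b c) x hx p
      exact this) z hz0 r s hrs
    ((n : k[X]) * (C (b / 2) + C c * X)) (by rw [hzd]; simp)
  obtain ⟨p, rfl⟩ := natDegree_eq_zero.mp (lemma1 _ hno P hP hPd)
  obtain ⟨q, rfl⟩ := natDegree_eq_zero.mp (lemma1 _ hno Q hQ hQd)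
  rw [Dp_C, Dp_C] at key
  have h1 := congrArg (fun f => coeff f 1) key
  rw [← C_eq_natCast] at h1
  have e1 : C (n : k) * (C (b / 2) + C c * X) * (C p * C q) + C p * C (d q) =
      C (n * c * p * q) * X + C (n * (b / 2) * p * q + p * d q) := by
    simp only [C_mul, C_add]; ring
  rw [e1, ← C_mul] at h1
  simp [coeff_C] at h1
  simp at hP hQ
  tauto

theorem caseA {k : Type*} [Field k] [CharZero k] (d : ZDer k) (a b c : k) (hc : c ≠ 0)
    (hno : ∀ q : k[X], Irreducible q → ¬ q ∣ Dp d (Ric a b c) q)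
    {N : Type*} [Field N] (e : ZDer N) (φ : k[X][X] →+* N) (hφ : Function.Injective φ)
    (h : ∀ x, e (φ x) = φ (D2 d a b c x)) 
    (n : ℕ) (hn : n ≠ 0) (z : N) (r s : k[X][X]) (hrs : z = φ r / φ s) (hz0 : z ≠ 0)
    (hzd : e z = n * (φ (C (C (b / 2))) + φ (C (C c)) * φ (C X)) * z) : False := by
  obtain ⟨P, Q, hP, hQ, -, hPd, hQd, key⟩ := ratio (D2 d a b c) e φ hφ h z hz0 r s hrs
    ((n : k[X][X]) * (C (C (b / 2)) + C (C c) * C X)) (by rw [hzd]; simp)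
  obtain ⟨u, m, hm⟩ := lemma3 d a b c hc hno P hP hPd
  obtain ⟨v, l, hl⟩ := lemma3 d a b c hc hno Q hQ hQd
  rw [hm, hl] at key
  have k2 : (C (C u) + (m : k[X][X]) * (C (C b) + C (C c) * (X + C X))) =
      (n : k[X][X]) * (C (C (b / 2)) + C (C c) * C X) +
      (C (C v) + (l : k[X][X]) * (C (C b) + C (C c) * (X + C X))) := by
    apply mul_right_cancel₀ (mul_ne_zero hP hQ)
    linear_combination key
  have ev : ∀ s t : k, u + m * (b + c * (t + s)) = n * (b / 2 + c * s) +
      (v + l * (b + c * (t + s))) := by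
    intro s t
    have := congrArg (fun f => eval s (eval (C t) f)) k2
    simpa using this
  have h00 := ev 0 0
  have h01 := ev 0 1
  have h10 := ev 1 0
  have : (n : k) * c = 0 := by linear_combination h01 - h10
  rcases mul_eq_zero.mp this with h' | h'
  · exact hn (by exact_mod_cast h')
  · exact hc h'

/-- If the Riccati equation `X′ = α₀ + α₁X + α₂X²` (`α₂ ≠ 0`) has no
solution in the algebraic closure of `k`, and `λ₁ ≠ λ₂` are solutions in a differential
field extension `M` of `k`, then `Y′ = (α₁/2 + α₂λ₁)Y` has no nonzero solution algebraic
over `k(λ₁, λ₂)` in any differential field extension of `M`. -/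
theorem stmt_2 (k : Type*) [Field k] [CharZero k]
    (δk : k → k) (hδk : IsRingDeriv δk)
    (α₀ α₁ α₂ : k) (hα₂ : α₂ ≠ 0)
    (kb : Type*) [Field kb] [Algebra k kb] [IsAlgClosure k kb]
    (δkb : kb → kb) (hδkb : IsRingDeriv δkb) (hreskb : RestrictsTo δk δkb)
    (hnosol : ∀ x : kb,
      δkb x ≠ algebraMap k kb α₀ + algebraMap k kb α₁ * x + algebraMap k kb α₂ * x ^ 2)
    (M : Type*) [Field M] [Algebra k M]
    (δM : M → M) (hδM : IsRingDeriv δM) (hresM : RestrictsTo δk δM)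
    (l₁ l₂ : M) (hne : l₁ ≠ l₂)
    (hl₁ : δM l₁ = algebraMap k M α₀ + algebraMap k M α₁ * l₁ + algebraMap k M α₂ * l₁ ^ 2)
    (hl₂ : δM l₂ = algebraMap k M α₀ + algebraMap k M α₁ * l₂ + algebraMap k M α₂ * l₂ ^ 2)
    (N : Type*) [Field N] [Algebra k N] [Algebra M N] [IsScalarTower k M N]
    (δN : N → N) (hδN : IsRingDeriv δN) (hresN : RestrictsTo δM δN)
    (y : N)
    (hy : δN y = (algebraMap k N (α₁ / 2) + algebraMap k N α₂ * algebraMap M N l₁) * y)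
    (halg : IsAlgebraic
      ↥(IntermediateField.adjoin k {algebraMap M N l₁, algebraMap M N l₂}) y) :
    y = 0 := by
  by_contra hy0
  set d := toDer hδk
  set e := toDer hδN
  set x₁ := algebraMap M N l₁ with hx₁
  set x₂ := algebraMap M N l₂ with hx₂
  have h : ∀ x, e (algebraMap k N x) = algebraMap k N (d x) := by
    intro x
    change δN _ = algebraMap k N (δk x)
    rw [IsScalarTower.algebraMap_apply k M N, hresN, hresM, ← IsScalarTower.algebraMap_apply]
  have hr : ∀ l : M, δM l = algebraMap k M α₀ + algebraMap k M α₁ * l + algebraMap k M α₂ * l ^ 2 →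
      e (algebraMap M N l) = eval₂ (algebraMap k N) (algebraMap M N l) (Ric α₀ α₁ α₂) := by
    intro l hl
    change δN _ = _
    rw [hresN, hl]
    simp [Ric, ← IsScalarTower.algebraMap_apply]
  have h1 := hr l₁ hl₁
  have h2 := hr l₂ hl₂
  rw [← hx₁] at h1
  rw [← hx₂] at h2
  have hno : ∀ q : k[X], Irreducible q → ¬ q ∣ Dp d (Ric α₀ α₁ α₂) q := fun q hq hd =>
    D_irred d α₀ α₁ α₂ (toDer hδkb) hreskb hnosol q hq hd
  have htr : Transcendental k x₁ := by
    intro hal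
    apply hno _ (minpoly.irreducible hal.isIntegral)
    apply minpoly.dvd
    have := der_eval₂ d e (algebraMap k N) h (Ric α₀ α₁ α₂) x₁ h1 (minpoly k x₁)
    rw [← aeval_def, ← aeval_def, minpoly.aeval, map_zero] at this
    exact this.symm
  let ψ : k[X] →+* N := eval₂RingHom (algebraMap k N) x₁
  have hψ : ∀ p, e (ψ p) = ψ (Dp d (Ric α₀ α₁ α₂) p) := fun p =>
    der_eval₂ d e (algebraMap k N) h (Ric α₀ α₁ α₂) x₁ h1 p
  let φ : k[X][X] →+* N := eval₂RingHom ψ x₂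
  have hφ : ∀ p, e (φ p) = φ (D2 d α₀ α₁ α₂ p) := fun p =>
    der_eval₂ _ e ψ hψ (Ric (C α₀) (C α₁) (C α₂)) x₂ (by rw [h2]; simp [Ric, ψ]) p
  by_cases hinj : Function.Injective φ
  · obtain ⟨n, hn, z, hz, hz0, hzd⟩ := descend δN hδN _
      (adjoin_stable d e h {x₁, x₂} (by
        rintro s (rfl | rfl)
        · rw [h1]
          exact ric_mem _ _ _ _ _ (IntermediateField.subset_adjoin _ _ (by simp))
        · rw [h2]
          exact ric_mem _ _ _ _ _ (IntermediateField.subset_adjoin _ _ (by simp))))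
      _ y (add_mem (IntermediateField.algebraMap_mem _ _) (mul_mem
        (IntermediateField.algebraMap_mem _ _) (IntermediateField.subset_adjoin _ _ (by simp))))
      hy hy0 halg
    obtain ⟨r, hr, s, hs, hrs⟩ := IntermediateField.mem_adjoin_iff_div.mp hz
    have hrange : ∀ r ∈ Algebra.adjoin k {x₁, x₂}, ∃ p, φ p = r := by
      intro r hr
      induction hr using Algebra.adjoin_induction with
      | mem x hx =>
        rcases hx with rfl | rfl
        · exact ⟨C X, by simp [φ, ψ]⟩
        · exact ⟨X, by simp [φ, ψ]⟩
      | algebraMap r => exact ⟨C (C r), by simp [φ, ψ]⟩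
      | add x y _ _ hx hy =>
        obtain ⟨p, rfl⟩ := hx
        obtain ⟨q, rfl⟩ := hy
        exact ⟨p + q, map_add _ _ _⟩
      | mul x y _ _ hx hy =>
        obtain ⟨p, rfl⟩ := hx
        obtain ⟨q, rfl⟩ := hy
        exact ⟨p * q, map_mul _ _ _⟩
    obtain ⟨p, rfl⟩ := hrange r hr
    obtain ⟨q, rfl⟩ := hrange s hs
    refine caseA d α₀ α₁ α₂ hα₂ hno e φ hinj hφ n hn z p q hrs hz0 ?_
    change δN z = _
    rw [hzd]
    simp [φ, ψ]
  · rw [injective_iff_map_eq_zero] at hinj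
    push Not at hinj
    obtain ⟨p, hp, hp0⟩ := hinj
    set K := IntermediateField.adjoin k {x₁} with hK
    have hx₁K : x₁ ∈ K := IntermediateField.subset_adjoin _ _ (by simp)
    have hx2alg : IsAlgebraic K x₂ := by
      let χ : k[X] →+* K := eval₂RingHom (algebraMap k K) ⟨x₁, hx₁K⟩
      have hχψ : (algebraMap K N).comp χ = ψ := by
        ext a
        · simp [χ, ψ]
        · simp [χ, ψ]
      have hχ : Function.Injective χ := by
        have : Function.Injective ψ := transcendental_iff_injective.mp htr
        rw [← hχψ, RingHom.coe_comp] at this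
        exact Function.Injective.of_comp this
      refine ⟨p.map χ, (Polynomial.map_ne_zero_iff hχ).mpr hp0, ?_⟩
      rw [aeval_def, eval₂_map, hχψ]
      exact hp
    have hyalg : IsAlgebraic K y := by
      have hle : ∀ w ∈ IntermediateField.adjoin k {x₁, x₂}, IsAlgebraic K w := by
        intro w hw
        induction hw using IntermediateField.adjoin_induction with
        | mem x hx =>
          rcases hx with rfl | rfl
          · exact isAlgebraic_algebraMap (⟨_, hx₁K⟩ : K)
          · exact hx2alg
        | algebraMap r => exact isAlgebraic_algebraMap (algebraMap k K r)
        | add x y _ _ hx hy => exact hx.add hy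
        | inv x _ hx => exact hx.inv
        | mul x y _ _ hx hy => exact hx.mul hy
      let ι : IntermediateField.adjoin k {x₁, x₂} →+* algebraicClosure K N :=
        (algebraMap (IntermediateField.adjoin k {x₁, x₂}) N).codRestrict (algebraicClosure K N)
          (fun w => mem_algebraicClosure_iff.mpr (hle _ w.2))
      have hB : IsAlgebraic (algebraicClosure K N) y := by
        obtain ⟨f, hf0, hf⟩ := halg
        refine ⟨f.map ι, ?_, ?_⟩
        · exact (Polynomial.map_ne_zero_iff (RingHom.injective _)).mpr hf0
        · rw [aeval_def, eval₂_map]; exact hf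
      exact hB.restrictScalars K
    obtain ⟨n, hn, z, hz, hz0, hzd⟩ := descend δN hδN K
      (adjoin_stable d e h {x₁} (by
        rintro s rfl
        rw [h1]
        exact ric_mem _ _ _ _ _ hx₁K))
      _ y (add_mem (IntermediateField.algebraMap_mem _ _) (mul_mem
        (IntermediateField.algebraMap_mem _ _) hx₁K))
      hy hy0 hyalg
    exact caseB d α₀ α₁ α₂ hα₂ hno e h x₁ h1 htr n hn z hz hz0 hzd
end

section
/- Let (k,′) be a differential field of characteristic zero, α, β ∈ kˣ, Q = (α,β)_k, ξ an element of an algebraic closure of k with ξ² = α, a₁, a₂, a₃ ∈ k, ϑ = a₁u + a₂v + a₃uv, and d = d_{(u,v)} + ∂_ϑ. Let (L,′) be a differential field extension of (k(ξ),′). If (Q,d) is split by (L,′), then the associated Riccati equation X′ = (a₂+a₃ξ)β + 2(a₁ξ + β′/(4β))X − (a₂−a₃ξ)X² has at least two distinct solutions in L. -/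
open scoped TensorProduct

/-- The differential algebra `(Q, d)` over `(k, δk)` is split by the differential field
`(L, δL)`: there is an `L`-algebra isomorphism `L ⊗[k] Q ≃ M₂(L)` intertwining the
induced derivation `d* = δL ⊗ id + id ⊗ d` with the coordinate-wise derivation on `M₂(L)`. -/
def DiffSplits (k : Type*) [Field k] (Q : Type*) [Ring Q] [Algebra k Q]
    (d : Q → Q) (L : Type*) [Field L] [Algebra k L] (δL : L → L) : Prop :=
  ∃ D : L ⊗[k] Q → L ⊗[k] Q,
    IsRingDeriv D ∧
    (∀ (y : L) (x : Q), D (y ⊗ₜ[k] x) = δL y ⊗ₜ[k] x + y ⊗ₜ[k] d x) ∧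
    ∃ φ : (L ⊗[k] Q) ≃ₐ[L] Matrix (Fin 2) (Fin 2) L,
      ∀ z, φ (D z) = (φ z).map δL

theorem ric_step {L : Type*} [Field L] (δ : L → L) (hδ : IsRingDeriv δ)
    (w z p q r s : L) (hw0 : w ≠ 0) (hw : δ w = p * w - q * z) (hz : δ z = r * z - s * w) :
    δ (-z / w) = s + (r - p) * (-z / w) - q * (-z / w) ^ 2 := by
  have h : (-z / w) * w + z = 0 := by field_simp; ring
  have h0 : δ 0 = 0 := by simpa using hδ.map_add 0 0
  have h1 := congrArg δ h
  rw [hδ.map_add, hδ.leibniz, h0, hw, hz] at h1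
  generalize -z / w = X at *
  have hz' : z = - (X * w) := by linear_combination h
  subst hz'
  apply mul_right_cancel₀ hw0
  linear_combination h1

theorem ric_two {L : Type*} [Field L] (δ : L → L) (hδ : IsRingDeriv δ)
    (w z : Fin 2 → L) (p q r s : L) (hw : ∀ i, δ (w i) = p * w i - q * z i)
    (hz : ∀ i, δ (z i) = r * z i - s * w i) (hdet : w 0 * z 1 - w 1 * z 0 ≠ 0) :
    ∃ l₁ l₂ : L, l₁ ≠ l₂ ∧ δ l₁ = s + (r - p) * l₁ - q * l₁ ^ 2 ∧
      δ l₂ = s + (r - p) * l₂ - q * l₂ ^ 2 := by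
  have key : ∀ w₁ z₁ w₂ z₂ : L, w₁ ≠ 0 → w₂ ≠ 0 → w₁ * z₂ - w₂ * z₁ ≠ 0 →
      -z₁ / w₁ ≠ -z₂ / w₂ := by
    intro w₁ z₁ w₂ z₂ h1 h2 h3 h
    rw [div_eq_div_iff h1 h2] at h
    apply h3
    linear_combination h
  have hws : δ (w 0 + w 1) = p * (w 0 + w 1) - q * (z 0 + z 1) := by
    rw [hδ.map_add, hw, hw]; ring
  have hzs : δ (z 0 + z 1) = r * (z 0 + z 1) - s * (w 0 + w 1) := by
    rw [hδ.map_add, hz, hz]; ring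
  by_cases h0 : w 0 = 0
  · have h1 : w 1 ≠ 0 := by
      intro h1; apply hdet; rw [h0, h1]; ring
    have h2 : w 0 + w 1 ≠ 0 := by rwa [h0, zero_add]
    refine ⟨_, _, key (w 0 + w 1) (z 0 + z 1) (w 1) (z 1) h2 h1 ?_,
      ric_step δ hδ _ _ p q r s h2 hws hzs, ric_step δ hδ _ _ p q r s h1 (hw 1) (hz 1)⟩
    intro h; apply hdet; linear_combination h
  · by_cases h1 : w 1 = 0
    · have h2 : w 0 + w 1 ≠ 0 := by rwa [h1, add_zero]
      refine ⟨_, _, key (w 0) (z 0) (w 0 + w 1) (z 0 + z 1) h0 h2 ?_,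
        ric_step δ hδ _ _ p q r s h0 (hw 0) (hz 0), ric_step δ hδ _ _ p q r s h2 hws hzs⟩
      intro h; apply hdet; linear_combination h
    · exact ⟨_, _, key (w 0) (z 0) (w 1) (z 1) h0 h1 hdet,
        ric_step δ hδ _ _ p q r s h0 (hw 0) (hz 0), ric_step δ hδ _ _ p q r s h1 (hw 1) (hz 1)⟩

open Matrix in
theorem ric_core {L : Type*} [Field L] (h2 : (2 : L) ≠ 0) (δ : L → L) (hδ : IsRingDeriv δ)
    (ξ b a₁ a₂ a₃ c e : L) (hξ : ξ ≠ 0) (hb : b ≠ 0) (hδξ : δ ξ = c * ξ)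
    (U V T : Matrix (Fin 2) (Fin 2) L) (hU : U * U = (ξ ^ 2) • (1 : Matrix (Fin 2) (Fin 2) L))
    (hV : V * V = b • (1 : Matrix (Fin 2) (Fin 2) L)) (hUV : V * U = -(U * V))
    (hT : T = a₁ • U + a₂ • V + a₃ • (U * V))
    (hdU : U.map δ = c • U + (U * T - T * U)) (hdV : V.map δ = e • V + (V * T - T * V)) :
    ∃ l₁ l₂ : L, l₁ ≠ l₂ ∧
      δ l₁ = (a₂ + a₃ * ξ) * b + (2 * a₁ * ξ + e) * l₁ - (a₂ - a₃ * ξ) * l₁ ^ 2 ∧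
      δ l₂ = (a₂ + a₃ * ξ) * b + (2 * a₁ * ξ + e) * l₂ - (a₂ - a₃ * ξ) * l₂ ^ 2 := by
  -- eigenvector
  obtain ⟨w, hw0, hw⟩ : ∃ w : Fin 2 → L, w ≠ 0 ∧ U *ᵥ w = ξ • w := by
    have hne : U + ξ • (1 : Matrix (Fin 2) (Fin 2) L) ≠ 0 := by
      intro h
      have hUs : U = -(ξ • (1 : Matrix (Fin 2) (Fin 2) L)) := eq_neg_of_add_eq_zero_left h
      rw [hUs] at hUV
      have h3 : (2 * ξ) • V = 0 := by
        simp at hUV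
        rw [mul_smul, two_smul]
        nth_rewrite 1 [← neg_neg (ξ • V)]
        rw [hUV]; simp
      have hV0 : V = 0 := (smul_eq_zero.1 h3).resolve_left (mul_ne_zero h2 hξ)
      rw [hV0] at hV
      have := congrFun (congrFun hV 0) 0
      simp at this
      exact hb this.symm
    obtain ⟨x, hx⟩ : ∃ x, (U + ξ • (1 : Matrix (Fin 2) (Fin 2) L)) *ᵥ x ≠ 0 := by
      by_contra! hcon
      apply hne
      apply Matrix.ext_of_mulVec_single
      intro i
      rw [hcon, zero_mulVec]
    refine ⟨_, hx, ?_⟩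
    rw [mulVec_mulVec, mul_add, hU, ← smul_mulVec]
    congr 1
    rw [smul_add, smul_smul]
    simp [pow_two, add_comm]
  obtain ⟨z, hz⟩ : ∃ z, z = V *ᵥ w := ⟨_, rfl⟩
  have hVz : V *ᵥ z = b • w := by rw [hz, mulVec_mulVec, hV, smul_mulVec, one_mulVec]
  have hUz : U *ᵥ z = -(ξ • z) := by
    have : (V * U) *ᵥ w = -((U * V) *ᵥ w) := by rw [hUV, neg_mulVec]
    rw [← mulVec_mulVec, ← mulVec_mulVec, ← hz, hw, mulVec_smul, ← hz] at this
    rw [this, neg_neg]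
  have hz0 : z ≠ 0 := by
    intro h
    rw [h, mulVec_zero] at hVz
    exact (smul_ne_zero hb hw0) hVz.symm
  have hTw : T *ᵥ w = (a₁ * ξ) • w + (a₂ - a₃ * ξ) • z := by
    rw [hT, add_mulVec, add_mulVec, smul_mulVec, smul_mulVec, smul_mulVec, ← mulVec_mulVec, ← hz,
      hUz, hw]
    module
  have hTz : T *ᵥ z = (-(a₁ * ξ)) • z + ((a₂ + a₃ * ξ) * b) • w := by
    rw [hT, add_mulVec, add_mulVec, smul_mulVec, smul_mulVec, smul_mulVec, ← mulVec_mulVec, hVz,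
      hUz, mulVec_smul, hw]
    module
  have hdet : w 0 * z 1 - w 1 * z 0 ≠ 0 := by
    intro h
    obtain ⟨m, hm⟩ : ∃ m : L, z = m • w := by
      by_cases h0 : w 0 = 0
      · have h1 : w 1 ≠ 0 := by
          intro h1; apply hw0; ext i; fin_cases i <;> simp [h0, h1]
        refine ⟨z 1 / w 1, ?_⟩
        ext i; fin_cases i
        · simp; field_simp; linear_combination -h
        · simp; field_simp
      · refine ⟨z 0 / w 0, ?_⟩
        ext i; fin_cases i
        · simp; field_simp
        · simp; field_simp; linear_combination h
    have h3 : (2 * ξ) • z = 0 := by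
      have h4 : U *ᵥ z = ξ • z := by rw [hm, mulVec_smul, hw, smul_comm]
      rw [hUz] at h4
      rw [mul_smul, two_smul]
      nth_rewrite 1 [← h4]
      simp
    exact hz0 ((smul_eq_zero.1 h3).resolve_left (mul_ne_zero h2 hξ))
  have hspan : ∀ y : Fin 2 → L, ∃ p q : L, y = p • w + q • z := by
    intro y
    refine ⟨(y 0 * z 1 - y 1 * z 0) / (w 0 * z 1 - w 1 * z 0),
      (w 0 * y 1 - w 1 * y 0) / (w 0 * z 1 - w 1 * z 0), ?_⟩
    ext i; fin_cases i
    · simp only [Fin.zero_eta, Fin.mk_one, Pi.add_apply, Pi.smul_apply, smul_eq_mul]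
      rw [div_mul_eq_mul_div, div_mul_eq_mul_div, ← add_div, eq_div_iff hdet]
      ring
    · simp only [Fin.zero_eta, Fin.mk_one, Pi.add_apply, Pi.smul_apply, smul_eq_mul]
      rw [div_mul_eq_mul_div, div_mul_eq_mul_div, ← add_div, eq_div_iff hdet]
      ring
  have hprod : ∀ (M : Matrix (Fin 2) (Fin 2) L) (y : Fin 2 → L),
      δ ∘ (M *ᵥ y) = (M.map δ) *ᵥ y + M *ᵥ (δ ∘ y) := by
    intro M y
    ext i
    simp only [Function.comp_apply, Pi.add_apply, mulVec, dotProduct, Fin.sum_univ_two,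
      hδ.map_add, hδ.leibniz, map_apply]
    ring
  have hsm : ∀ (t : L) (y : Fin 2 → L), δ ∘ (t • y) = δ t • y + t • (δ ∘ y) := by
    intro t y
    ext i
    simp [hδ.leibniz]
  obtain ⟨l, m, hlm⟩ := hspan (δ ∘ w + T *ᵥ w)
  have hm0 : m = 0 := by
    have h1 : δ ∘ (U *ᵥ w) = δ ∘ (ξ • w) := by rw [hw]
    rw [hprod, hsm, hdU, hδξ, add_mulVec, sub_mulVec, smul_mulVec, ← mulVec_mulVec,
      ← mulVec_mulVec, hw, mulVec_smul] at h1
    have h3 : U *ᵥ (δ ∘ w + T *ᵥ w) = ξ • (δ ∘ w + T *ᵥ w) := by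
      rw [mulVec_add]
      linear_combination (norm := module) h1
    rw [hlm, mulVec_add, mulVec_smul, mulVec_smul, hw, hUz] at h3
    have h4 : (2 * ξ * m) • z = 0 := by
      linear_combination (norm := module) -h3
    exact (mul_eq_zero.1 ((smul_eq_zero.1 h4).resolve_right hz0)).resolve_left (mul_ne_zero h2 hξ)
  rw [hm0, zero_smul, add_zero] at hlm
  have hdw : δ ∘ w = (l - a₁ * ξ) • w - (a₂ - a₃ * ξ) • z := by
    rw [hTw] at hlm
    linear_combination (norm := module) hlm
  have hdz : δ ∘ z = (e + l + a₁ * ξ) • z - ((a₂ + a₃ * ξ) * b) • w := by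
    have h1 : δ ∘ w = l • w - T *ᵥ w := by rw [← hlm]; abel
    have h3 : δ ∘ z = δ ∘ (V *ᵥ w) := by rw [← hz]
    rw [hprod, hdV, add_mulVec, sub_mulVec, smul_mulVec, ← mulVec_mulVec, ← mulVec_mulVec, ← hz,
      h1, mulVec_sub, mulVec_smul, ← hz, hTz] at h3
    rw [h3]
    module
  obtain ⟨l₁, l₂, hne, e1, e2⟩ := ric_two δ hδ w z _ _ _ _
    (fun i => by simpa using congrFun hdw i) (fun i => by simpa using congrFun hdz i) hdet
  exact ⟨l₁, l₂, hne, by rw [e1]; ring, by rw [e2]; ring⟩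

/-- If the differential quaternion algebra `(Q, d)` with
`d = d_{(u,v)} + ∂_ϑ`, `ϑ = a₁u + a₂v + a₃uv`, is split by a differential field
extension `(L, ′)` of `(k(ξ), ′)` (where `ξ² = α`), then the associated Riccati equation
`X′ = (a₂+a₃ξ)β + 2(a₁ξ + β′/(4β))X − (a₂−a₃ξ)X²` has two distinct solutions in `L`. -/
theorem stmt_3 (k : Type*) [Field k] [CharZero k]
    (δk : k → k) (hδk : IsRingDeriv δk)
    (α β : k) (hα : α ≠ 0) (hβ : β ≠ 0)
    (Q : Type*) [Ring Q] [Algebra k Q]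
    (u v : Q) (hu : u * u = algebraMap k Q α) (hv : v * v = algebraMap k Q β)
    (huv : v * u = -(u * v))
    (bQ : Module.Basis (Fin 4) k Q) (hbQ : ⇑bQ = ![1, u, v, u * v])
    (d : Q → Q) (hd : IsRingDeriv d) (hdk : RestrictsTo δk d)
    (a₁ a₂ a₃ : k) (ϑ : Q)
    (hϑ : ϑ = algebraMap k Q a₁ * u + algebraMap k Q a₂ * v + algebraMap k Q a₃ * (u * v))
    (hdu : d u = algebraMap k Q (δk α / (2 * α)) * u + (u * ϑ - ϑ * u))
    (hdv : d v = algebraMap k Q (δk β / (2 * β)) * v + (v * ϑ - ϑ * v))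
    (L : Type*) [Field L] [Algebra k L]
    (δL : L → L) (hδL : IsRingDeriv δL) (hresL : RestrictsTo δk δL)
    (ξ : L) (hξ : ξ ^ 2 = algebraMap k L α)
    (hsplit : DiffSplits k Q d L δL) :
    ∃ l₁ l₂ : L, l₁ ≠ l₂ ∧
      (δL l₁ = (algebraMap k L a₂ + algebraMap k L a₃ * ξ) * algebraMap k L β
        + 2 * (algebraMap k L a₁ * ξ + algebraMap k L (δk β / (4 * β))) * l₁
        - (algebraMap k L a₂ - algebraMap k L a₃ * ξ) * l₁ ^ 2) ∧
      (δL l₂ = (algebraMap k L a₂ + algebraMap k L a₃ * ξ) * algebraMap k L β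
        + 2 * (algebraMap k L a₁ * ξ + algebraMap k L (δk β / (4 * β))) * l₂
        - (algebraMap k L a₂ - algebraMap k L a₃ * ξ) * l₂ ^ 2) := by
  obtain ⟨D, hD, hDt, φ, hφ⟩ := hsplit
  have hinj := (algebraMap k L).injective
  have h2 : (2 : L) ≠ 0 := by
    have := (map_ne_zero (algebraMap k L)).2 (two_ne_zero (α := k))
    rwa [map_ofNat] at this
  have h2k : (2 : k) ≠ 0 := two_ne_zero
  have hα' : algebraMap k L α ≠ 0 := (map_ne_zero _).2 hα
  have hβ' : algebraMap k L β ≠ 0 := (map_ne_zero _).2 hβ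
  have hξ0 : ξ ≠ 0 := by
    rintro rfl
    apply hα'
    rw [← hξ]; simp
  have hδξ : δL ξ = algebraMap k L (δk α / (2 * α)) * ξ := by
    have h1 := congrArg δL hξ
    rw [pow_two, hδL.leibniz, hresL] at h1
    rw [map_div₀, map_mul, ← hξ, ← h1, map_ofNat]
    field_simp
    ring
  -- the map from Q to matrices
  obtain ⟨ψ, hψ⟩ : ∃ ψ : Q →+* Matrix (Fin 2) (Fin 2) L, ∀ x, ψ x = φ ((1 : L) ⊗ₜ[k] x) :=
    ⟨(φ : (L ⊗[k] Q) →+* Matrix (Fin 2) (Fin 2) L).comp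
      (Algebra.TensorProduct.includeRight : Q →ₐ[k] L ⊗[k] Q).toRingHom, fun x => rfl⟩
  have hψc : ∀ c : k, ψ (algebraMap k Q c) = algebraMap k L c • 1 := by
    intro c
    rw [hψ, Algebra.algebraMap_eq_smul_one, ← TensorProduct.smul_tmul, ← map_one φ, ← map_smul,
      Algebra.TensorProduct.one_def, TensorProduct.smul_tmul', Algebra.algebraMap_eq_smul_one]
    simp
  have hδ1 : δL 1 = 0 := by simpa using hδL.leibniz 1 1
  have hψd : ∀ x, (ψ x).map δL = ψ (d x) := by
    intro x
    rw [hψ, hψ, ← hφ, hDt, hδ1, TensorProduct.zero_tmul, zero_add]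
  obtain ⟨l₁, l₂, hne, e1, e2⟩ := ric_core h2 δL hδL ξ (algebraMap k L β) (algebraMap k L a₁)
    (algebraMap k L a₂) (algebraMap k L a₃) (algebraMap k L (δk α / (2 * α)))
    (algebraMap k L (δk β / (2 * β))) hξ0 hβ' hδξ (ψ u) (ψ v) (ψ ϑ)
    (by rw [← map_mul, hu, hψc, hξ]) (by rw [← map_mul, hv, hψc])
    (by rw [← map_mul, huv, map_neg, map_mul]) (by rw [hϑ]; simp [hψc])
    (by rw [hψd, hdu]; simp [hψc]) (by rw [hψd, hdv]; simp [hψc])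
  have h4 : 2 * algebraMap k L (δk β / (4 * β)) = algebraMap k L (δk β / (2 * β)) := by
    rw [← map_ofNat (algebraMap k L) 2, ← map_mul]
    congr 1
    field_simp
    ring
  refine ⟨l₁, l₂, hne, ?_, ?_⟩
  · rw [e1, ← h4]; ring
  · rw [e2, ← h4]; ring
end

section
/- Let (k,′) be a differential field of characteristic zero, α, β ∈ kˣ, Q = (α,β)_k, ξ an element of an algebraic closure of k with ξ² = α, a₁, a₂, a₃ ∈ k, ϑ = a₁u + a₂v + a₃uv, and d = d_{(u,v)} + ∂_ϑ. Let (L,′) be a differential field extension of (k(ξ),′) containing two distinct solutions λ₁ ≠ λ₂ of the associated Riccati equation X′ = (a₂+a₃ξ)β + 2(a₁ξ + β′/(4β))X − (a₂−a₃ξ)X², and let μ be a nonzero element of a differential field extension of (L,′) satisfying μ′/μ = (a₂−a₃ξ)λ₁ − (a₁ξ + β′/(4β)). Then (Q,d) is split by (L(μ),′). -/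
open scoped TensorProduct

lemma quat_exists_hom {k : Type*} [Field k] {α β : k}
    {Q : Type*} [Ring Q] [Algebra k Q]
    {u v : Q} (hu : u * u = algebraMap k Q α) (hv : v * v = algebraMap k Q β)
    (huv : v * u = -(u * v))
    (bQ : Module.Basis (Fin 4) k Q) (hbQ : ⇑bQ = ![1, u, v, u * v])
    {B : Type*} [Ring B] [Algebra k B] {U V : B}
    (hU : U * U = algebraMap k B α) (hV : V * V = algebraMap k B β)
    (hUV : V * U = -(U * V)) :
    ∃ ψ : Q →ₐ[k] B, ψ u = U ∧ ψ v = V := by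
  let q : QuaternionAlgebra.Basis Q α 0 β :=
    { i := u, j := v, k := u * v
      i_mul_i := by rw [hu, Algebra.algebraMap_eq_smul_one]; simp
      j_mul_j := by rw [hv, Algebra.algebraMap_eq_smul_one]
      i_mul_j := rfl
      j_mul_i := by rw [huv]; simp }
  let q' : QuaternionAlgebra.Basis B α 0 β :=
    { i := U, j := V, k := U * V
      i_mul_i := by rw [hU, Algebra.algebraMap_eq_smul_one]; simp
      j_mul_j := by rw [hV, Algebra.algebraMap_eq_smul_one]
      i_mul_j := rfl
      j_mul_i := by rw [hUV]; simp }
  have hsurj : Function.Surjective q.liftHom := by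
    intro x
    refine ⟨⟨bQ.repr x 0, bQ.repr x 1, bQ.repr x 2, bQ.repr x 3⟩, ?_⟩
    conv_rhs => rw [← bQ.sum_repr x]
    simp [Fin.sum_univ_four, hbQ, QuaternionAlgebra.Basis.lift, q,
      Algebra.algebraMap_eq_smul_one]
  have hfr : Module.finrank k (QuaternionAlgebra k α 0 β) = Module.finrank k Q := by
    rw [QuaternionAlgebra.finrank_eq_four, Module.finrank_eq_card_basis bQ]; simp
  have : Module.Finite k Q := Module.Finite.of_basis bQ
  have hinj : Function.Injective q.liftHom :=
    (LinearMap.injective_iff_surjective_of_finrank_eq_finrank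
      (f := q.liftHom.toLinearMap) hfr).2 hsurj
  let e := AlgEquiv.ofBijective q.liftHom ⟨hinj, hsurj⟩
  have h1 : e.symm u = (QuaternionAlgebra.Basis.self k).i := by
    rw [AlgEquiv.symm_apply_eq]
    change _ = q.liftHom _
    simp [QuaternionAlgebra.Basis.lift, q]
  have h2 : e.symm v = (QuaternionAlgebra.Basis.self k).j := by
    rw [AlgEquiv.symm_apply_eq]
    change _ = q.liftHom _
    simp [QuaternionAlgebra.Basis.lift, q]
  refine ⟨q'.liftHom.comp e.symm.toAlgHom, ?_, ?_⟩
  · change q'.liftHom (e.symm u) = U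
    rw [h1]; simp [QuaternionAlgebra.Basis.lift, q']
  · change q'.liftHom (e.symm v) = V
    rw [h2]; simp [QuaternionAlgebra.Basis.lift, q']

lemma isRingDeriv_zero {A : Type*} [Ring A] {δ : A → A} (h : IsRingDeriv δ) : δ 0 = 0 := by
  have := h.map_add 0 0
  simpa using this

lemma isRingDeriv_one {A : Type*} [Ring A] {δ : A → A} (h : IsRingDeriv δ) : δ 1 = 0 := by
  have := h.leibniz 1 1
  simpa using this

lemma isRingDeriv_neg {A : Type*} [Ring A] {δ : A → A} (h : IsRingDeriv δ) (x : A) :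
    δ (-x) = -δ x := by
  have := h.map_add x (-x)
  rw [add_neg_cancel, isRingDeriv_zero h] at this
  exact eq_neg_of_add_eq_zero_right this.symm

lemma isRingDeriv_inv {A : Type*} [Field A] {δ : A → A} (h : IsRingDeriv δ) (x : A) :
    δ x⁻¹ = -(δ x) * x⁻¹ ^ 2 := by
  by_cases hx : x = 0
  · simp [hx, isRingDeriv_zero h]
  · have := h.leibniz x x⁻¹
    rw [mul_inv_cancel₀ hx, isRingDeriv_one h] at this
    field_simp
    field_simp at this
    linear_combination -this

lemma matrix_map_add {A : Type*} [Ring A] {δ : A → A} (h : IsRingDeriv δ)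
    (M N : Matrix (Fin 2) (Fin 2) A) : (M + N).map δ = M.map δ + N.map δ := by
  ext i j
  simp [h.map_add]

lemma matrix_map_mul {A : Type*} [Ring A] {δ : A → A} (h : IsRingDeriv δ)
    (M N : Matrix (Fin 2) (Fin 2) A) : (M * N).map δ = M.map δ * N + M * N.map δ := by
  ext i j
  simp only [Matrix.map_apply, Matrix.mul_apply, Matrix.add_apply, Fin.sum_univ_two, h.map_add,
    h.leibniz]
  abel

lemma matrix_map_smul {A : Type*} [CommRing A] {δ : A → A} (h : IsRingDeriv δ)
    (c : A) (M : Matrix (Fin 2) (Fin 2) A) : (c • M).map δ = δ c • M + c • M.map δ := by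
  ext i j
  simp [h.leibniz]

lemma diffSplits_of_hom {k : Type*} [Field k] {δk : k → k}
    {Q : Type*} [Ring Q] [Algebra k Q] {u v : Q}
    (bQ : Module.Basis (Fin 4) k Q) (hbQ : ⇑bQ = ![1, u, v, u * v])
    {d : Q → Q} (hd : IsRingDeriv d) (hdk : RestrictsTo δk d)
    {E : Type*} [Field E] [Algebra k E] {δ : E → E} (hδ : IsRingDeriv δ)
    (hres : RestrictsTo δk δ)
    (ψ : Q →ₐ[k] Matrix (Fin 2) (Fin 2) E)
    (h1 : (ψ u).map δ = ψ (d u)) (h2 : (ψ v).map δ = ψ (d v))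
    (hs : ∀ M : Matrix (Fin 2) (Fin 2) E, ∃ x y z w : E,
      M = x • 1 + y • ψ u + z • ψ v + w • (ψ u * ψ v)) :
    DiffSplits k Q d E δ := by
  let f : E ⊗[k] Q →ₐ[E] Matrix (Fin 2) (Fin 2) E :=
    Algebra.TensorProduct.lift (Algebra.ofId E _) ψ (fun x y => Algebra.commutes x (ψ y))
  have hf : ∀ y x, f (y ⊗ₜ[k] x) = y • ψ x := by
    intro y x
    rw [Algebra.smul_def]; rfl
  have hsurj : Function.Surjective f := by
    intro M
    obtain ⟨x, y, z, w, rfl⟩ := hs M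
    refine ⟨x ⊗ₜ 1 + y ⊗ₜ u + z ⊗ₜ v + w ⊗ₜ (u * v), ?_⟩
    simp only [map_add, hf, map_one, map_mul]
  have : Module.Finite k Q := Module.Finite.of_basis bQ
  have hfr : Module.finrank E (E ⊗[k] Q) = Module.finrank E (Matrix (Fin 2) (Fin 2) E) := by
    rw [Module.finrank_baseChange, Module.finrank_eq_card_basis bQ, Module.finrank_matrix]; simp
  have hinj : Function.Injective f :=
    (LinearMap.injective_iff_surjective_of_finrank_eq_finrank
      (f := f.toLinearMap) hfr).2 hsurj
  let φ := AlgEquiv.ofBijective f ⟨hinj, hsurj⟩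
  have hφ : ∀ y x, φ (y ⊗ₜ[k] x) = y • ψ x := hf
  have hadd : ∀ x y : Q, (ψ x).map δ = ψ (d x) → (ψ y).map δ = ψ (d y) →
      (ψ (x + y)).map δ = ψ (d (x + y)) := by
    intro x y hx hy
    rw [hd.map_add, map_add, map_add, matrix_map_add hδ, hx, hy]
  have hmul : ∀ x y : Q, (ψ x).map δ = ψ (d x) → (ψ y).map δ = ψ (d y) →
      (ψ (x * y)).map δ = ψ (d (x * y)) := by
    intro x y hx hy
    rw [hd.leibniz, map_add, map_mul, map_mul, map_mul, matrix_map_mul hδ, hx, hy]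
  have halg : ∀ c : k, (ψ (algebraMap k Q c)).map δ = ψ (d (algebraMap k Q c)) := by
    intro c
    rw [hdk, AlgHom.commutes, AlgHom.commutes]
    ext i j
    simp only [Matrix.map_apply, Matrix.algebraMap_matrix_apply]
    split_ifs
    · exact hres c
    · exact isRingDeriv_zero hδ
  have hone : (ψ 1).map δ = ψ (d 1) := by simpa using halg 1
  have hψ : ∀ x : Q, (ψ x).map δ = ψ (d x) := by
    intro x
    rw [← bQ.sum_repr x]
    simp only [Fin.sum_univ_four, hbQ, Algebra.smul_def]
    exact hadd _ _ (hadd _ _ (hadd _ _ (hmul _ _ (halg _) hone) (hmul _ _ (halg _) h1))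
      (hmul _ _ (halg _) h2)) (hmul _ _ (halg _) (hmul _ _ h1 h2))
  refine ⟨fun z => φ.symm ((φ z).map δ), ⟨?_, ?_⟩, ?_, φ, ?_⟩
  · intro x y
    simp only [map_add, matrix_map_add hδ]
  · intro x y
    simp only [map_mul, map_add, matrix_map_mul hδ, AlgEquiv.symm_apply_apply]
  · intro y x
    apply φ.injective
    simp only [AlgEquiv.apply_symm_apply, map_add, hφ, matrix_map_smul hδ, hψ]
  · intro z
    simp only [AlgEquiv.apply_symm_apply]

lemma diffSplits_core {k : Type*} [Field k] [CharZero k]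
    {δk : k → k}
    {α β : k} (hα : α ≠ 0) (hβ : β ≠ 0)
    {Q : Type*} [Ring Q] [Algebra k Q]
    {u v : Q} (hu : u * u = algebraMap k Q α) (hv : v * v = algebraMap k Q β)
    (huv : v * u = -(u * v))
    (bQ : Module.Basis (Fin 4) k Q) (hbQ : ⇑bQ = ![1, u, v, u * v])
    {d : Q → Q} (hd : IsRingDeriv d) (hdk : RestrictsTo δk d)
    {a₁ a₂ a₃ : k} {ϑ : Q}
    (hϑ : ϑ = algebraMap k Q a₁ * u + algebraMap k Q a₂ * v + algebraMap k Q a₃ * (u * v))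
    (hdu : d u = algebraMap k Q (δk α / (2 * α)) * u + (u * ϑ - ϑ * u))
    (hdv : d v = algebraMap k Q (δk β / (2 * β)) * v + (v * ϑ - ϑ * v))
    {E : Type*} [Field E] [Algebra k E]
    {δ : E → E} (hδ : IsRingDeriv δ) (hres : RestrictsTo δk δ)
    {ξ : E} (hξ : ξ ^ 2 = algebraMap k E α)
    {l₁ l₂ : E} (hne : l₁ ≠ l₂)
    (hl₁ : δ l₁ = (algebraMap k E a₂ + algebraMap k E a₃ * ξ) * algebraMap k E β
        + 2 * (algebraMap k E a₁ * ξ + algebraMap k E (δk β / (4 * β))) * l₁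
        - (algebraMap k E a₂ - algebraMap k E a₃ * ξ) * l₁ ^ 2)
    (hl₂ : δ l₂ = (algebraMap k E a₂ + algebraMap k E a₃ * ξ) * algebraMap k E β
        + 2 * (algebraMap k E a₁ * ξ + algebraMap k E (δk β / (4 * β))) * l₂
        - (algebraMap k E a₂ - algebraMap k E a₃ * ξ) * l₂ ^ 2)
    {μ : E} (hμ0 : μ ≠ 0)
    (hμ : δ μ = ((algebraMap k E a₂ - algebraMap k E a₃ * ξ) * l₁
        - (algebraMap k E a₁ * ξ + algebraMap k E (δk β / (4 * β)))) * μ) :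
    DiffSplits k Q d E δ := by
  have : CharZero E := charZero_of_injective_algebraMap (algebraMap k E).injective
  obtain ⟨A, hA⟩ : ∃ A, A = algebraMap k E α := ⟨_, rfl⟩
  obtain ⟨b, hb⟩ : ∃ b, b = algebraMap k E β := ⟨_, rfl⟩
  obtain ⟨b₁, hb₁⟩ : ∃ b, b = algebraMap k E a₁ := ⟨_, rfl⟩
  obtain ⟨b₂, hb₂⟩ : ∃ b, b = algebraMap k E a₂ := ⟨_, rfl⟩
  obtain ⟨b₃, hb₃⟩ : ∃ b, b = algebraMap k E a₃ := ⟨_, rfl⟩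
  obtain ⟨c, hc⟩ : ∃ c, c = algebraMap k E (δk β / (4 * β)) := ⟨_, rfl⟩
  obtain ⟨s, hs⟩ : ∃ s, s = algebraMap k E (δk α / (2 * α)) := ⟨_, rfl⟩
  have hb0 : b ≠ 0 := by rw [hb]; simpa using hβ
  have hA0 : A ≠ 0 := by rw [hA]; simpa using hα
  have hξ0 : ξ ≠ 0 := by
    rintro rfl
    apply hA0
    rw [hA, ← hξ]; simp
  have hδb : δ b = 4 * c * b := by
    rw [hb, hres, hc]
    simp only [map_div₀, map_mul, map_ofNat]
    rw [← hb]
    field_simp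
  have hcc : algebraMap k E (δk β / (2 * β)) = 2 * c := by
    rw [hc]
    simp only [map_div₀, map_mul, map_ofNat]
    rw [← hb]
    field_simp
    norm_num
  have hδA : δ A = 2 * s * A := by
    rw [hA, hres, hs]
    simp only [map_div₀, map_mul, map_ofNat]
    rw [← hA]
    field_simp
  have hδξ : δ ξ = s * ξ := by
    have h := hδ.leibniz ξ ξ
    rw [← pow_two, hξ, ← hA, hδA] at h
    rw [← hA] at hξ
    have h2 : (2 * ξ) * δ ξ = (2 * ξ) * (s * ξ) := by
      rw [← hξ] at h
      linear_combination -h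
    exact mul_left_cancel₀ (mul_ne_zero two_ne_zero hξ0) h2
  have hsub : l₁ - l₂ ≠ 0 := sub_ne_zero.2 hne
  obtain ⟨η, hη⟩ : ∃ η, η = (μ * (l₁ - l₂))⁻¹ := ⟨_, rfl⟩
  have hdet : η * μ * (l₁ - l₂) = 1 := by rw [hη]; field_simp
  rw [← hb₁, ← hb₂, ← hb₃, ← hb, ← hc] at hl₁ hl₂
  rw [← hb₁, ← hb₂, ← hb₃, ← hc] at hμ
  rw [← hA] at hξ
  have hδη : δ η = ((b₂ - b₃ * ξ) * l₂ - (b₁ * ξ + c)) * η := by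
    rw [hη, isRingDeriv_inv hδ, hδ.leibniz, sub_eq_add_neg l₁, hδ.map_add, isRingDeriv_neg hδ,
      hl₁, hl₂, hμ, ← sub_eq_add_neg l₁]
    field_simp
    ring
  clear hη
  let F : Matrix (Fin 2) (Fin 2) E := !![l₁ * μ, l₂ * η; μ, η]
  let G : Matrix (Fin 2) (Fin 2) E := !![η, -(l₂ * η); -μ, l₁ * μ]
  let U : Matrix (Fin 2) (Fin 2) E := !![ξ, 0; 0, -ξ]
  let V : Matrix (Fin 2) (Fin 2) E := !![0, b; 1, 0]
  let P : Matrix (Fin 2) (Fin 2) E :=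
    !![b₁ * ξ + c, (b₂ + b₃ * ξ) * b; b₂ - b₃ * ξ, -(b₁ * ξ + c)]
  have hGF : G * F = 1 := by
    ext i j
    fin_cases i <;> fin_cases j <;> simp [F, G, Matrix.mul_apply] <;>
      first | ring1 | linear_combination hdet
  have hFG : F * G = 1 := mul_eq_one_comm.1 hGF
  have hF' : F.map δ = P * F := by
    ext i j
    fin_cases i <;> fin_cases j <;> simp [F, P, Matrix.mul_apply, hδ.leibniz, hl₁, hl₂, hμ, hδη] <;>
      ring1
  have hG' : G.map δ = -(G * P) := by
    have h := matrix_map_mul hδ G F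
    have h0 : (1 : Matrix (Fin 2) (Fin 2) E).map δ = 0 := by
      ext i j
      fin_cases i <;> fin_cases j <;> simp [isRingDeriv_one hδ, isRingDeriv_zero hδ]
    rw [hGF, h0, hF'] at h
    calc G.map δ = (G.map δ * F + G * (P * F)) * G - G * P * (F * G) := by
          rw [add_mul, mul_assoc, hFG]; simp only [mul_assoc, hFG]; simp
      _ = -(G * P) := by rw [← h, hFG]; simp
  have key : ∀ X Y, (G * X * F) * (G * Y * F) = G * (X * Y) * F := by
    intro X Y
    calc (G * X * F) * (G * Y * F) = G * X * (F * G) * Y * F := by simp only [mul_assoc]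
      _ = _ := by rw [hFG]; simp only [mul_assoc, one_mul]
  have hsm : ∀ (x : k) X, algebraMap k (Matrix (Fin 2) (Fin 2) E) x * X
      = algebraMap k E x • X := by
    intro x X
    rw [← Algebra.smul_def, algebraMap_smul]
  have hUU : U * U = A • 1 := by
    ext i j
    fin_cases i <;> fin_cases j <;> simp [U, Matrix.mul_apply, ← hξ, pow_two]
  have hVV : V * V = b • 1 := by
    ext i j
    fin_cases i <;> fin_cases j <;> simp [V, Matrix.mul_apply]
  have hVU : V * U = -(U * V) := by
    ext i j
    fin_cases i <;> fin_cases j <;> simp [U, V, Matrix.mul_apply, mul_comm]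
  obtain ⟨ψ, hψu, hψv⟩ := quat_exists_hom hu hv huv bQ hbQ
    (U := G * U * F) (V := G * V * F)
    (by rw [key, hUU, ← mul_one (algebraMap _ _ _), hsm, ← hA]; simp [hGF])
    (by rw [key, hVV, ← mul_one (algebraMap _ _ _), hsm, ← hb]; simp [hGF])
    (by rw [key, key, hVU]; simp)
  let T : Matrix (Fin 2) (Fin 2) E := b₁ • U + b₂ • V + b₃ • (U * V)
  have hψϑ : ψ ϑ = G * T * F := by
    rw [hϑ]
    simp only [map_add, map_mul, AlgHom.commutes, hψu, hψv, hsm, key, ← hb₁, ← hb₂, ← hb₃, T,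
      mul_add, add_mul, Matrix.mul_smul, Matrix.smul_mul]
  have hconj : ∀ X, (G * X * F).map δ = G * (X.map δ + X * P - P * X) * F := by
    intro X
    rw [matrix_map_mul hδ, matrix_map_mul hδ, hG', hF']
    noncomm_ring
  refine diffSplits_of_hom bQ hbQ hd hdk hδ hres ψ ?_ ?_ ?_
  · rw [hdu, map_add, map_sub, map_mul, map_mul, map_mul, AlgHom.commutes, hsm, ← hs, hψϑ, hψu,
      key, key, hconj]
    have : U.map δ + U * P - P * U = s • U + (U * T - T * U) := by
      ext i j
      fin_cases i <;> fin_cases j <;>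
        simp [U, V, T, P, Matrix.mul_apply, hδξ, isRingDeriv_zero hδ, isRingDeriv_neg hδ] <;>
        ring1
    rw [this]
    simp only [mul_add, add_mul, mul_sub, sub_mul, Matrix.mul_smul, Matrix.smul_mul]
  · rw [hdv, map_add, map_sub, map_mul, map_mul, map_mul, AlgHom.commutes, hsm, hcc, hψϑ, hψv,
      key, key, hconj]
    have : V.map δ + V * P - P * V = (2 * c) • V + (V * T - T * V) := by
      ext i j
      fin_cases i <;> fin_cases j <;>
        simp [U, V, T, P, Matrix.mul_apply, hδb, isRingDeriv_zero hδ, isRingDeriv_one hδ] <;>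
        ring1
    rw [this]
    simp only [mul_add, add_mul, mul_sub, sub_mul, Matrix.mul_smul, Matrix.smul_mul]
  · intro M
    have h : ∀ R : Matrix (Fin 2) (Fin 2) E, ∃ x y z w : E,
        R = x • 1 + y • U + z • V + w • (U * V) := by
      intro R
      refine ⟨(R 0 0 + R 1 1) / 2, (R 0 0 - R 1 1) / (2 * ξ), (R 0 1 / b + R 1 0) / 2,
        (R 0 1 / b - R 1 0) / (2 * ξ), ?_⟩
      ext i j
      fin_cases i <;> fin_cases j <;> simp [U, V, Matrix.mul_apply] <;> field_simp <;> ring1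
    obtain ⟨x, y, z, w, hR⟩ := h (F * M * G)
    refine ⟨x, y, z, w, ?_⟩
    rw [hψu, hψv, key]
    calc M = G * (F * M * G) * F := by
          rw [show G * (F * M * G) * F = (G * F) * M * (G * F) by simp only [mul_assoc], hGF]
          simp
      _ = _ := by
          rw [hR]
          simp only [mul_add, add_mul, Matrix.mul_smul, Matrix.smul_mul, mul_one, hGF]

/-- If `(L, ′)` is a differential field extension of `(k(ξ), ′)`
containing two distinct solutions `λ₁ ≠ λ₂` of the associated Riccati equation, and `μ`
is a nonzero element of a differential field extension of `L` with
`μ′/μ = (a₂−a₃ξ)λ₁ − (a₁ξ + β′/(4β))`, then `(Q, d)` is split by `(L(μ), ′)`. -/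
theorem stmt_4 (k : Type*) [Field k] [CharZero k]
    (δk : k → k) (hδk : IsRingDeriv δk)
    (α β : k) (hα : α ≠ 0) (hβ : β ≠ 0)
    (Q : Type*) [Ring Q] [Algebra k Q]
    (u v : Q) (hu : u * u = algebraMap k Q α) (hv : v * v = algebraMap k Q β)
    (huv : v * u = -(u * v))
    (bQ : Module.Basis (Fin 4) k Q) (hbQ : ⇑bQ = ![1, u, v, u * v])
    (d : Q → Q) (hd : IsRingDeriv d) (hdk : RestrictsTo δk d)
    (a₁ a₂ a₃ : k) (ϑ : Q)
    (hϑ : ϑ = algebraMap k Q a₁ * u + algebraMap k Q a₂ * v + algebraMap k Q a₃ * (u * v))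
    (hdu : d u = algebraMap k Q (δk α / (2 * α)) * u + (u * ϑ - ϑ * u))
    (hdv : d v = algebraMap k Q (δk β / (2 * β)) * v + (v * ϑ - ϑ * v))
    (L : Type*) [Field L] [Algebra k L]
    (δL : L → L) (hδL : IsRingDeriv δL) (hresL : RestrictsTo δk δL)
    (ξ : L) (hξ : ξ ^ 2 = algebraMap k L α)
    (l₁ l₂ : L) (hne : l₁ ≠ l₂)
    (hl₁ : δL l₁ = (algebraMap k L a₂ + algebraMap k L a₃ * ξ) * algebraMap k L β
        + 2 * (algebraMap k L a₁ * ξ + algebraMap k L (δk β / (4 * β))) * l₁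
        - (algebraMap k L a₂ - algebraMap k L a₃ * ξ) * l₁ ^ 2)
    (hl₂ : δL l₂ = (algebraMap k L a₂ + algebraMap k L a₃ * ξ) * algebraMap k L β
        + 2 * (algebraMap k L a₁ * ξ + algebraMap k L (δk β / (4 * β))) * l₂
        - (algebraMap k L a₂ - algebraMap k L a₃ * ξ) * l₂ ^ 2)
    (N : Type*) [Field N] [Algebra k N] [Algebra L N] [IsScalarTower k L N]
    (δN : N → N) (hδN : IsRingDeriv δN) (hresN : RestrictsTo δL δN)
    (μ : N) (hμ0 : μ ≠ 0)
    (hμ : δN μ = algebraMap L N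
      ((algebraMap k L a₂ - algebraMap k L a₃ * ξ) * l₁
        - (algebraMap k L a₁ * ξ + algebraMap k L (δk β / (4 * β)))) * μ) :
    ∃ δE : ↥(IntermediateField.adjoin L {μ}) → ↥(IntermediateField.adjoin L {μ}),
      IsRingDeriv δE ∧
      (∀ x : ↥(IntermediateField.adjoin L {μ}),
        algebraMap ↥(IntermediateField.adjoin L {μ}) N (δE x)
          = δN (algebraMap ↥(IntermediateField.adjoin L {μ}) N x)) ∧
      DiffSplits k Q d ↥(IntermediateField.adjoin L {μ}) δE := by
  have hcl : ∀ x ∈ IntermediateField.adjoin L {μ}, δN x ∈ IntermediateField.adjoin L {μ} := by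
    intro x hx
    induction hx using IntermediateField.adjoin_induction with
    | mem x hx =>
      rw [Set.mem_singleton_iff] at hx
      subst hx
      rw [hμ]
      exact mul_mem (IntermediateField.algebraMap_mem _ _)
        (IntermediateField.mem_adjoin_simple_self L x)
    | algebraMap x =>
      rw [hresN]
      exact IntermediateField.algebraMap_mem _ _
    | add x y hx hy h1 h2 => rw [hδN.map_add]; exact add_mem h1 h2
    | inv x hx h =>
      rw [isRingDeriv_inv hδN]
      exact mul_mem (neg_mem h) (pow_mem (inv_mem hx) 2)
    | mul x y hx hy h1 h2 =>
      rw [hδN.leibniz]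
      exact add_mem (mul_mem h1 hy) (mul_mem hx h2)
  let δE : ↥(IntermediateField.adjoin L {μ}) → ↥(IntermediateField.adjoin L {μ}) :=
    fun x => ⟨δN x, hcl x x.2⟩
  have hδE : IsRingDeriv δE :=
    ⟨fun x y => Subtype.ext (hδN.map_add _ _), fun x y => Subtype.ext (hδN.leibniz _ _)⟩
  have hLE : ∀ y : L, δE (algebraMap L _ y) = algebraMap L _ (δL y) :=
    fun y => Subtype.ext (hresN y)
  have htow : ∀ c : k, algebraMap k ↥(IntermediateField.adjoin L {μ}) c
      = algebraMap L _ (algebraMap k L c) := fun c => IsScalarTower.algebraMap_apply _ _ _ _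
  refine ⟨δE, hδE, fun x => rfl, ?_⟩
  refine diffSplits_core (δk := δk) hα hβ hu hv huv bQ hbQ hd hdk hϑ hdu hdv hδE ?_
    (ξ := algebraMap L _ ξ) ?_ (l₁ := algebraMap L _ l₁) (l₂ := algebraMap L _ l₂) ?_ ?_ ?_
    (μ := ⟨μ, IntermediateField.mem_adjoin_simple_self L μ⟩) ?_ ?_
  · intro c
    rw [htow, htow, hLE, hresL]
  · rw [htow, ← hξ, map_pow]
  · exact fun h => hne ((algebraMap L _).injective h)
  · rw [hLE, hl₁]
    simp only [htow, map_add, map_sub, map_mul, map_pow, map_ofNat]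
  · rw [hLE, hl₂]
    simp only [htow, map_add, map_sub, map_mul, map_pow, map_ofNat]
  · exact fun h => hμ0 (congrArg Subtype.val h)
  · simp only [htow, ← map_add, ← map_sub, ← map_mul]
    exact Subtype.ext hμ
end

section
/- Let (k,′) be a differential field of characteristic zero, α, β ∈ kˣ, and Q = (α,β)_k. Let w be an element of one of the commutative subalgebras k + ku, k + kv, or k + k·uv of Q, and let d = d_{(u,v)} + ∂_w. Then (Q,d) is split by a differential field extension of (k,′) of transcendence degree at most 1 over k. -/
open scoped TensorProduct

/-- The transcendence degree of `L` over `k` is at least `n`: there are `n` algebraically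
independent elements. -/
def TrdegGE (k L : Type*) [CommRing k] [CommRing L] [Algebra k L] (n : ℕ) : Prop :=
  ∃ f : Fin n → L, AlgebraicIndependent k f

/-- The transcendence degree of `L` over `k` is at most `n`: there is no algebraically
independent family of `n + 1` elements. -/
def TrdegLE (k L : Type*) [CommRing k] [CommRing L] [Algebra k L] (n : ℕ) : Prop :=
  ∀ f : Fin (n + 1) → L, ¬ AlgebraicIndependent k f

universe u

section Helpers

open Polynomial

theorem exists_deriv_fractionRing {A : Type*} [CommRing A] [IsDomain A] (F : Type*) [Field F] [Algebra A F]
    [IsFractionRing A F] (δ : A → A)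
    (hδ : IsRingDeriv δ) :
    ∃ δF : F → F, IsRingDeriv δF ∧
      ∀ x, δF (algebraMap A F x) = algebraMap A F (δ x) := by
  have h1 : δ 1 = 0 := by
    have := hδ.leibniz 1 1
    simpa using this
  have h0 : δ 0 = 0 := by
    have := hδ.map_add 0 0
    simpa using this
  let f : A →+* TrivSqZeroExt F F :=
    { toFun := fun x => ((algebraMap A F x, algebraMap A F (δ x)) : F × F)
      map_one' := TrivSqZeroExt.ext (map_one _) (by
        change algebraMap A F (δ 1) = 0
        rw [h1, map_zero])
      map_zero' := TrivSqZeroExt.ext (map_zero _) (by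
        change algebraMap A F (δ 0) = 0
        rw [h0, map_zero])
      map_add' := fun x y => TrivSqZeroExt.ext (map_add _ _ _) (by
        change algebraMap A F (δ (x + y)) = algebraMap A F (δ x) + algebraMap A F (δ y)
        rw [hδ.map_add, map_add])
      map_mul' := fun x y => TrivSqZeroExt.ext (map_mul _ _ _) (by
        change algebraMap A F (δ (x * y)) = algebraMap A F x * algebraMap A F (δ y) +
          algebraMap A F (δ x) * algebraMap A F y
        rw [hδ.leibniz, map_add, map_mul, map_mul]
        ring) }
  have hf1 : ∀ x, (f x).fst = algebraMap A F x := fun x => rfl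
  have hf2 : ∀ x, (f x).snd = algebraMap A F (δ x) := fun x => rfl
  have hf : ∀ y : nonZeroDivisors A, IsUnit (f y) := by
    intro y
    rw [TrivSqZeroExt.isUnit_iff_isUnit_fst]
    rw [hf1]
    simp
  let g : F →+* TrivSqZeroExt F F := IsLocalization.lift hf
  have hg : ∀ x, g (algebraMap A F x) = f x := fun x => IsLocalization.lift_eq hf x
  have hfst : ((TrivSqZeroExt.fstHom F F F).toRingHom.comp g) = RingHom.id F := by
    apply IsLocalization.ringHom_ext (nonZeroDivisors A)
    ext x
    simp [hg, hf1]
  have hfst' : ∀ x, (g x).fst = x := fun x => by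
    have := congrArg (fun h : F →+* F => h x) hfst
    simpa using this
  refine ⟨fun x => (g x).snd, ⟨fun x y => by simp, fun x y => ?_⟩, fun x => ?_⟩
  · simp [hfst']
    ring
  · rw [← hf2, ← hg]

theorem exists_field {k : Type u} [Field k] [CharZero k]
    (δk : k → k) (hδk : IsRingDeriv δk) (α β c : k) :
    ∃ (L : Type u) (_ : Field L) (_ : Algebra k L) (δL : L → L) (a b g : L),
      IsRingDeriv δL ∧ RestrictsTo δk δL ∧ TrdegLE k L 1 ∧
      a * a = algebraMap k L α ∧ b * b = algebraMap k L β ∧ g ≠ 0 ∧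
      δL g = algebraMap k L c * a * g := by
  let _ : Differential k := ⟨Derivation.mk' (AddMonoidHom.toIntLinearMap
    (AddMonoidHom.mk' δk hδk.map_add)) (fun a b => by
      simp [hδk.leibniz]; ring)⟩
  have hk : ∀ x : k, Differential.deriv x = δk x := fun x => rfl
  obtain ⟨a₀, ha₀⟩ := IsAlgClosed.exists_pow_nat_eq (algebraMap k (AlgebraicClosure k) α) two_pos
  obtain ⟨b₀, hb₀⟩ := IsAlgClosed.exists_pow_nat_eq (algebraMap k (AlgebraicClosure k) β) two_pos
  let K := IntermediateField.adjoin k {a₀, b₀}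
  have : FiniteDimensional k K := IntermediateField.finiteDimensional_adjoin
    (fun x _ => Algebra.IsIntegral.isIntegral x)
  let a : K := ⟨a₀, IntermediateField.subset_adjoin _ _ (by simp)⟩
  let b : K := ⟨b₀, IntermediateField.subset_adjoin _ _ (by simp)⟩
  have ha : a * a = algebraMap k K α := Subtype.ext (by simpa [pow_two] using ha₀)
  have hb : b * b = algebraMap k K β := Subtype.ext (by simpa [pow_two] using hb₀)
  let δP : K[X] → K[X] := Differential.implicitDeriv (C (algebraMap k K c * a) * X)
  have hδP : IsRingDeriv δP := ⟨fun x y => by simp [δP], fun x y => by simp [δP]; ring⟩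
  obtain ⟨δL, hδL, hext⟩ := exists_deriv_fractionRing (FractionRing K[X]) δP hδP
  refine ⟨FractionRing K[X], inferInstance, inferInstance, δL, algebraMap K _ a,
    algebraMap K _ b, algebraMap K[X] _ X, hδL, ?_, ?_, ?_, ?_, ?_, ?_⟩
  · intro x
    have e : ∀ x : k, algebraMap k (FractionRing K[X]) x =
      algebraMap K[X] _ (C (algebraMap k K x)) := fun x => rfl
    rw [e, hext, e]
    simp only [δP, Differential.implicitDeriv_C, deriv_algebraMap, hk]
  · intro f hf
    have h1 := hf.lift_cardinalMk_le_trdeg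
    have h2 := trdeg_add_eq k K (A := FractionRing K[X])
    have h3 := trdeg_add_eq K K[X] (A := FractionRing K[X])
    have : Algebra.IsAlgebraic K[X] (FractionRing K[X]) := IsLocalization.isAlgebraic _ (nonZeroDivisors K[X])
    rw [Polynomial.trdeg_of_isDomain, trdeg_eq_zero] at h3
    rw [trdeg_eq_zero, ← h3] at h2
    rw [← h2] at h1
    simp at h1
  · rw [← map_mul, ha]; rfl
  · rw [← map_mul, hb]; rfl
  · simp
  · rw [hext]
    simp only [δP, Differential.implicitDeriv_X, map_mul]
    rfl

theorem split_core {k : Type u} [Field k] [CharZero k]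
    (δk : k → k) (hδk : IsRingDeriv δk)
    (α β : k) (hα : α ≠ 0) (hβ : β ≠ 0)
    {Q : Type u} [Ring Q] [Algebra k Q]
    (u v : Q) (hu : u * u = algebraMap k Q α) (hv : v * v = algebraMap k Q β)
    (huv : v * u = -(u * v))
    (hfin : Module.finrank k Q = 4) (htop : Algebra.adjoin k {u, v} = ⊤)
    (c : k)
    (d : Q → Q) (hd : IsRingDeriv d) (hdk : RestrictsTo δk d)
    (hdu : d u = algebraMap k Q (δk α / (2 * α)) * u)
    (hdv : d v = algebraMap k Q (δk β / (2 * β)) * v + algebraMap k Q c * (u * v)) :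
    ∃ (L : Type u) (_ : Field L) (_ : Algebra k L) (δL : L → L),
      IsRingDeriv δL ∧ RestrictsTo δk δL ∧ TrdegLE k L 1 ∧ DiffSplits k Q d L δL := by
  obtain ⟨L, _, _, δL, a, b, g, hδL, hres, htr, ha, hb, hg, hgd⟩ := exists_field δk hδk α β c
  refine ⟨L, _, _, δL, hδL, hres, htr, ?_⟩
  have : CharZero L := charZero_of_injective_algebraMap (algebraMap k L).injective
  have ha0 : a ≠ 0 := by
    rintro rfl
    apply hα
    apply (algebraMap k L).injective
    simpa using ha.symm
  have hb0 : b ≠ 0 := by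
    rintro rfl
    apply hβ
    apply (algebraMap k L).injective
    simpa using hb.symm
  have hL0 : δL 0 = 0 := by simpa using hδL.map_add 0 0
  have hL1 : δL 1 = 0 := by simpa using hδL.leibniz 1 1
  have hLneg : ∀ x, δL (-x) = - δL x := fun x => by
    have := hδL.map_add x (-x)
    rw [add_neg_cancel, hL0] at this
    linear_combination -this
  have hda : δL a = algebraMap k L (δk α / (2 * α)) * a := by
    have := hδL.leibniz a a
    rw [ha, hres] at this
    have h2 : algebraMap k L α ≠ 0 := by simpa using hα
    simp only [map_div₀, map_mul, map_ofNat, this]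
    field_simp
    rw [← ha]
    ring
  have hdb : δL b = algebraMap k L (δk β / (2 * β)) * b := by
    have := hδL.leibniz b b
    rw [hb, hres] at this
    have h2 : algebraMap k L β ≠ 0 := by simpa using hβ
    simp only [map_div₀, map_mul, map_ofNat, this]
    field_simp
    rw [← hb]
    ring
  -- the inverse of `g`
  have hgi : δL g⁻¹ = - (algebraMap k L c * a * g⁻¹) := by
    have := hδL.leibniz g g⁻¹
    rw [mul_inv_cancel₀ hg, hL1, hgd] at this
    field_simp at this ⊢
    linear_combination -this
  let U : Matrix (Fin 2) (Fin 2) L := !![a, 0; 0, -a]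
  let V : Matrix (Fin 2) (Fin 2) L := !![0, b * g; b * g⁻¹, 0]
  have hUU : U * U = algebraMap k _ α := by
    ext i j
    fin_cases i <;> fin_cases j <;> simp [U, ha, Matrix.algebraMap_matrix_apply]
  have hVV : V * V = algebraMap k _ β := by
    ext i j
    fin_cases i <;> fin_cases j <;> simp [V, ← hb, Matrix.algebraMap_matrix_apply] <;> field_simp
  have hVU : V * U = -(U * V) := by
    ext i j
    fin_cases i <;> fin_cases j <;> simp [U, V] <;> ring
  -- quaternion algebra
  let BQ : QuaternionAlgebra.Basis Q α 0 β :=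
    { i := u, j := v, k := u * v
      i_mul_i := by simp [hu, Algebra.algebraMap_eq_smul_one]
      j_mul_j := by simp [hv, Algebra.algebraMap_eq_smul_one]
      i_mul_j := rfl
      j_mul_i := by simp [huv] }
  let BM : QuaternionAlgebra.Basis (Matrix (Fin 2) (Fin 2) L) α 0 β :=
    { i := U, j := V, k := U * V
      i_mul_i := by simp [hUU, Algebra.algebraMap_eq_smul_one]
      j_mul_j := by simp [hVV, Algebra.algebraMap_eq_smul_one]
      i_mul_j := rfl
      j_mul_i := by simp [hVU] }
  have hsurj : Function.Surjective BQ.liftHom := by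
    rw [← AlgHom.range_eq_top, QuaternionAlgebra.Basis.range_liftHom, eq_top_iff, ← htop]
    apply Algebra.adjoin_mono
    intro x hx
    simp only [Set.mem_insert_iff, Set.mem_singleton_iff] at hx ⊢
    rcases hx with rfl | rfl
    · exact Or.inl rfl
    · exact Or.inr (Or.inl rfl)
  have : FiniteDimensional k Q := Module.finite_of_finrank_pos (by omega)
  have hinj : Function.Injective BQ.liftHom := by
    have := LinearMap.injective_iff_surjective_of_finrank_eq_finrank
      (f := BQ.liftHom.toLinearMap) (by rw [hfin, QuaternionAlgebra.finrank_eq_four])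
    exact this.2 hsurj
  let e := AlgEquiv.ofBijective BQ.liftHom ⟨hinj, hsurj⟩
  let φ₁ : Q →ₐ[k] Matrix (Fin 2) (Fin 2) L := BM.liftHom.comp e.symm.toAlgHom
  have hφu : φ₁ u = U := by
    have : e.symm u = (QuaternionAlgebra.Basis.self k).i := by
      rw [AlgEquiv.symm_apply_eq]
      change _ = BQ.lift _
      simp [QuaternionAlgebra.Basis.lift, BQ]
    simp [φ₁, this, QuaternionAlgebra.Basis.lift, BM]
  have hφv : φ₁ v = V := by
    have : e.symm v = (QuaternionAlgebra.Basis.self k).j := by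
      rw [AlgEquiv.symm_apply_eq]
      change _ = BQ.lift _
      simp [QuaternionAlgebra.Basis.lift, BQ]
    simp [φ₁, this, QuaternionAlgebra.Basis.lift, BM]
  have hmadd : ∀ M N : Matrix (Fin 2) (Fin 2) L, (M + N).map δL = M.map δL + N.map δL := by
    intro M N
    ext i j
    simp [hδL.map_add]
  have hmmul : ∀ M N : Matrix (Fin 2) (Fin 2) L,
      (M * N).map δL = M.map δL * N + M * N.map δL := by
    intro M N
    ext i j
    simp [Matrix.mul_apply, hδL.map_add, hδL.leibniz]
    ring
  have hcomm : ∀ x, φ₁ (d x) = (φ₁ x).map δL := by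
    intro x
    have hx : x ∈ Algebra.adjoin k {u, v} := by rw [htop]; trivial
    induction hx using Algebra.adjoin_induction with
    | mem x hx =>
      rcases hx with rfl | hx
      · rw [hdu, map_mul, hφu, AlgHom.commutes]
        ext i j
        fin_cases i <;> fin_cases j <;>
          simp [U, hL0, hLneg, hda, Matrix.algebraMap_eq_diagonal, Matrix.mul_apply]
      · rw [Set.mem_singleton_iff] at hx
        subst hx
        rw [hdv, map_add, map_mul, map_mul, map_mul, hφu, hφv, AlgHom.commutes, AlgHom.commutes]
        ext i j
        fin_cases i <;> fin_cases j <;>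
          simp [U, V, hL0, hδL.leibniz, hdb, hgd, hgi, Matrix.algebraMap_eq_diagonal,
            Matrix.mul_apply] <;> ring
    | algebraMap r =>
      rw [hdk, AlgHom.commutes, AlgHom.commutes]
      ext i j
      fin_cases i <;> fin_cases j <;> simp [Matrix.algebraMap_matrix_apply, hL0, hres r]
    | add x y _ _ hx hy => rw [hd.map_add, map_add, map_add, hx, hy, hmadd]
    | mul x y _ _ hx hy => rw [hd.leibniz, map_add, map_mul, map_mul, map_mul, hx, hy, hmmul]
  let φ₀ : L ⊗[k] Q →ₐ[L] Matrix (Fin 2) (Fin 2) L :=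
    Algebra.TensorProduct.lift (Algebra.ofId L _) φ₁ (fun x y => Algebra.commutes x _)
  have hφ₀ : ∀ (y : L) (x : Q), φ₀ (y ⊗ₜ x) = y • φ₁ x := by
    intro y x
    rw [Algebra.smul_def]
    exact Algebra.TensorProduct.lift_tmul _ _ _ _ _
  have hs : Function.Surjective φ₀ := by
    intro M
    refine ⟨((M 0 0 + M 1 1) / 2) ⊗ₜ 1 + ((M 0 0 - M 1 1) / (2 * a)) ⊗ₜ u +
      ((M 0 1 * g⁻¹ + M 1 0 * g) / (2 * b)) ⊗ₜ v +
      ((M 0 1 * g⁻¹ - M 1 0 * g) / (2 * a * b)) ⊗ₜ (u * v), ?_⟩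
    simp only [map_add, hφ₀, map_mul, map_one, hφu, hφv]
    ext i j
    fin_cases i <;> fin_cases j <;> simp [U, V] <;> field_simp <;> ring
  have hfr : Module.finrank L (L ⊗[k] Q) = Module.finrank L (Matrix (Fin 2) (Fin 2) L) := by
    rw [Module.finrank_baseChange, hfin, Module.finrank_matrix]
    simp
  have hi : Function.Injective φ₀ :=
    (LinearMap.injective_iff_surjective_of_finrank_eq_finrank (f := φ₀.toLinearMap) hfr).2 hs
  let φ : L ⊗[k] Q ≃ₐ[L] Matrix (Fin 2) (Fin 2) L := AlgEquiv.ofBijective φ₀ ⟨hi, hs⟩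
  have hφ : ∀ (y : L) (x : Q), φ (y ⊗ₜ x) = y • φ₁ x := hφ₀
  refine ⟨fun z => φ.symm ((φ z).map δL), ⟨fun x y => ?_, fun x y => ?_⟩, fun y x => ?_, φ,
    fun z => by simp⟩
  · rw [map_add, hmadd, map_add]
  · rw [map_mul, hmmul, map_add, map_mul, map_mul]
    simp
  · rw [AlgEquiv.symm_apply_eq, map_add, hφ, hφ, hφ, hcomm]
    ext i j
    simp [hδL.leibniz]

end Helpers

/-- If `w` lies in one of the commutative subalgebras `k + ku`,
`k + kv` or `k + k·uv` of the quaternion algebra `Q = (α, β)_k` and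
`d = d_{(u,v)} + ∂_w`, then `(Q, d)` is split by a differential field extension of
transcendence degree at most `1` over `k`. -/
theorem stmt_6 (k : Type u) [Field k] [CharZero k]
    (δk : k → k) (hδk : IsRingDeriv δk)
    (α β : k) (hα : α ≠ 0) (hβ : β ≠ 0)
    (Q : Type u) [Ring Q] [Algebra k Q]
    (u v : Q) (hu : u * u = algebraMap k Q α) (hv : v * v = algebraMap k Q β)
    (huv : v * u = -(u * v))
    (bQ : Module.Basis (Fin 4) k Q) (hbQ : ⇑bQ = ![1, u, v, u * v])
    (w : Q)
    (hw : (∃ c₀ c₁ : k, w = algebraMap k Q c₀ + algebraMap k Q c₁ * u) ∨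
          (∃ c₀ c₁ : k, w = algebraMap k Q c₀ + algebraMap k Q c₁ * v) ∨
          (∃ c₀ c₁ : k, w = algebraMap k Q c₀ + algebraMap k Q c₁ * (u * v)))
    (d : Q → Q) (hd : IsRingDeriv d) (hdk : RestrictsTo δk d)
    (hdu : d u = algebraMap k Q (δk α / (2 * α)) * u + (u * w - w * u))
    (hdv : d v = algebraMap k Q (δk β / (2 * β)) * v + (v * w - w * v)) :
    ∃ (L : Type u) (_ : Field L) (_ : Algebra k L) (δL : L → L),
      IsRingDeriv δL ∧ RestrictsTo δk δL ∧ TrdegLE k L 1 ∧ DiffSplits k Q d L δL := by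
  have hfin : Module.finrank k Q = 4 := by
    rw [Module.finrank_eq_card_basis bQ]; simp
  have htop : Algebra.adjoin k {u, v} = ⊤ := by
    rw [eq_top_iff]
    intro x _
    have hu' : u ∈ Algebra.adjoin k {u, v} := Algebra.subset_adjoin (by simp)
    have hv' : v ∈ Algebra.adjoin k {u, v} := Algebra.subset_adjoin (by simp)
    rw [← bQ.sum_repr x]
    refine sum_mem fun i _ => Subalgebra.smul_mem _ ?_ _
    rw [hbQ]
    fin_cases i
    · exact one_mem _
    · exact hu'
    · exact hv'
    · exact mul_mem hu' hv'
  have hcm : ∀ (c : k) (x : Q), x * algebraMap k Q c = algebraMap k Q c * x :=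
    fun c x => (Algebra.commutes c x).symm
  have hvu : u * v = -(v * u) := by rw [huv, neg_neg]
  have key : ∀ (c₀ c₁ : k) (x y : Q), w = algebraMap k Q c₀ + algebraMap k Q c₁ * x →
      y * x = -(x * y) → y * w - w * y = algebraMap k Q (-2 * c₁) * (x * y) := by
    intro c₀ c₁ x y h h'
    rw [h, mul_add, hcm, ← mul_assoc, hcm, add_mul, mul_assoc, h', mul_assoc]
    simp only [map_mul, map_neg, map_ofNat]
    noncomm_ring
  have key0 : ∀ (c₀ c₁ : k) (x : Q), w = algebraMap k Q c₀ + algebraMap k Q c₁ * x →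
      x * w - w * x = 0 := by
    intro c₀ c₁ x h
    rw [h, mul_add, hcm, ← mul_assoc, hcm, add_mul, mul_assoc, sub_self]
  rcases hw with ⟨c₀, c₁, hw⟩ | ⟨c₀, c₁, hw⟩ | ⟨c₀, c₁, hw⟩
  · rw [key0 c₀ c₁ u hw, add_zero] at hdu
    rw [key c₀ c₁ u v hw huv] at hdv
    exact split_core δk hδk α β hα hβ u v hu hv huv hfin htop _ d hd hdk hdu hdv
  · rw [key0 c₀ c₁ v hw, add_zero] at hdv
    rw [key c₀ c₁ v u hw hvu] at hdu
    exact split_core δk hδk β α hβ hα v u hv hu hvu hfin (by rw [Set.pair_comm]; exact htop)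
      _ d hd hdk hdv hdu
  · have hanti : u * (u * v) = -(u * v * u) := by
      rw [mul_assoc u v u, huv, mul_neg, neg_neg]
    have hsq : (u * v) * (u * v) = algebraMap k Q (-(α * β)) := by
      calc (u * v) * (u * v) = u * (v * u) * v := by noncomm_ring
        _ = -((u * u) * (v * v)) := by rw [huv]; noncomm_ring
        _ = _ := by rw [hu, hv]; simp
    have hduv : d (u * v) = algebraMap k Q (δk (-(α * β)) / (2 * (-(α * β)))) * (u * v) := by
      have h0 : δk 0 = 0 := by simpa using hδk.map_add 0 0
      have hneg : δk (-(α * β)) = -(δk α * β + α * δk β) := by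
        have := hδk.map_add (α * β) (-(α * β))
        rw [add_neg_cancel, h0, hδk.leibniz] at this
        linear_combination -this
      have hc : δk (-(α * β)) / (2 * (-(α * β))) = δk α / (2 * α) + δk β / (2 * β) := by
        rw [hneg]; field_simp
      rw [hc, map_add, hd.leibniz, hdu, hdv]
      have h1 := key0 c₀ c₁ (u * v) hw
      have h2 : (u * w - w * u) * v + u * (v * w - w * v) = 0 := by
        rw [← h1]; noncomm_ring
      rw [add_mul, mul_add, ← mul_assoc u, hcm]
      calc _ = algebraMap k Q (δk α / (2 * α)) * (u * v) + algebraMap k Q (δk β / (2 * β)) * (u * v)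
            + ((u * w - w * u) * v + u * (v * w - w * v)) := by noncomm_ring
        _ = _ := by rw [h2, add_zero, add_mul]
    rw [key c₀ c₁ (u * v) u hw hanti] at hdu
    refine split_core δk hδk (-(α * β)) α (by simp [hα, hβ]) hα (u * v) u hsq hu hanti hfin ?_
      _ d hd hdk hduv hdu
    rw [eq_top_iff, ← htop, Algebra.adjoin_le_iff]
    have hu' : u ∈ Algebra.adjoin k {u * v, u} := Algebra.subset_adjoin (by simp)
    have hv' : u * v ∈ Algebra.adjoin k {u * v, u} := Algebra.subset_adjoin (by simp)
    rintro x (rfl | hx)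
    · exact hu'
    · rw [Set.mem_singleton_iff] at hx
      have : x = α⁻¹ • (u * (u * v)) := by
        rw [hx, ← mul_assoc, hu, ← Algebra.smul_def, smul_smul, inv_mul_cancel₀ hα, one_smul]
      rw [this]
      exact Subalgebra.smul_mem _ (mul_mem hu' hv') _
end
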